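/- arXiv:1901.11503 — 5 statements merged into one kernel-verified Lean document; each statement's English description precedes it below -/
import Mathlib

section
/- Consider online linear regression with partial information over T rounds: before the interaction, nature fixes feature vectors s_1,...,s_T in R^b with ||s_i|| <= C_s and targets a_1,...,a_T in R with |a_i| <= C_a, and the round-i loss is c_i(theta) = (theta^T s_i - a_i)^2. Run the bandit gradient descent algorithm in parameter space: initialize theta_1 in Theta; at round i sample u_i uniformly from the unit sphere S^{b-1} (independently across rounds), play theta_i' = theta_i + delta*u_i, observe only the scalar loss c_i(theta_i'), set theta_{i+1}' = theta_i - alpha*(c_i(theta_i')*b/delta)*u_i, and let theta_{i+1} be the Euclidean projection of theta_{i+1}' onto Theta. Then with step size alpha = C_theta*delta/(b*(C^2+C_s^2)*sqrt(T)) and perturbation delta = T^{-1/4}*sqrt(C_theta*b*(C^2+C_s^2)/(2L)), there is a constant kappa > 0 depending only on C_theta, C_s, C_a (and in particular independent of b and T) such that the expected average regret satisfies (1/T)*( E[sum_{i=1}^T c_i(theta_i)] - min_{theta* in Theta} sum_{i=1}^T c_i(theta*) ) <= kappa * sqrt(b) * T^{-1/4}. -/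
/-!
The losses are quadratic, so the one-point estimate `(b / δ) * c_i(θ_i + δ u) • u` is an exactly
unbiased estimate of `∇c_i(θ_i)` when `u` is uniform on the sphere. Expanding `c_i(θ_i + δ u)` in
`u`, the terms of degree `0` and `2` times `u` are odd and integrate to zero, while the term of
degree `1` is evaluated with `E[⟪u, s⟫ ⟪u, w⟫] = ⟪s, w⟫ / b` (`integral_onePoint_estimate`).

The iterate `θ_i` is a function of the samples before round `i` (`iterate_congr`), so the
sample of round `i` can be integrated out first (`integral_pi_update`). Together with the descent
inequality for a projected step (`IsProjection.descent`) and convexity of the loss,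
for every `x ∈ Θ` this gives (`round_bound`)

`2 α (E c_i(θ_i) - c_i(x)) ≤ E ‖θ_i - x‖² - E ‖θ_{i+1} - x‖² + α² (C b / δ)²`.

Summing telescopes, with `‖θ_0 - x‖ ≤ 2 Cθ`. Inserting `α` and `δ` (`parameter_arith`) gives the
rate, with `M = C² + Cs²` and constant `κ = Cθ (2 M + C² / (2 M)) / √(Cθ M / (2 L))`.
-/

open MeasureTheory Metric
open scoped RealInnerProductSpace

/-- The uniform probability measure on the Euclidean unit sphere in `ℝ^b`
(the normalized surface measure, pushed forward to `ℝ^b`). -/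
noncomputable def uniformSphere (b : ℕ) : Measure (EuclideanSpace ℝ (Fin b)) :=
  (((volume : Measure (EuclideanSpace ℝ (Fin b))).toSphere Set.univ)⁻¹ •
    (volume : Measure (EuclideanSpace ℝ (Fin b))).toSphere).map Subtype.val

/-- `y` is the Euclidean projection of `x` onto the set `Θ`. -/
def IsProjection {F : Type*} [NormedAddCommGroup F] (Θ : Set F) (x y : F) : Prop :=
  y ∈ Θ ∧ ∀ z ∈ Θ, ‖y - x‖ ≤ ‖z - x‖

/-! ### Moments of the uniform distribution on the sphere -/

lemma isProbabilityMeasure_uniformSphere {b : ℕ} (hb : 1 ≤ b) :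
    IsProbabilityMeasure (uniformSphere b) := by
  have : Nonempty (Fin b) := ⟨⟨0, hb⟩⟩
  have : NeZero (volume : Measure (EuclideanSpace ℝ (Fin b))).toSphere :=
    ⟨Measure.toSphere_ne_zero _⟩
  exact Measure.isProbabilityMeasure_map measurable_subtype_coe.aemeasurable

lemma ae_norm_uniformSphere (b : ℕ) : ∀ᵐ u ∂uniformSphere b, ‖u‖ = 1 := by
  rw [uniformSphere, ae_map_iff measurable_subtype_coe.aemeasurable
    (measurableSet_eq_fun measurable_norm measurable_const)]
  exact .of_forall fun u => by simp

open scoped Pointwise in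
/-- The cone over a rotated subset of the sphere is the rotated cone, and the Lebesgue measure is
invariant under linear isometries. -/
lemma map_uniformSphere {b : ℕ}
    (e : EuclideanSpace ℝ (Fin b) ≃ₗᵢ[ℝ] EuclideanSpace ℝ (Fin b)) :
    (uniformSphere b).map e = uniformSphere b := by
  ext s hs
  have hes : MeasurableSet (e ⁻¹' s) := e.continuous.measurable hs
  rw [Measure.map_apply e.continuous.measurable hs, uniformSphere,
    Measure.map_apply measurable_subtype_coe hs, Measure.map_apply measurable_subtype_coe hes,
    Measure.smul_apply, Measure.smul_apply,
    Measure.toSphere_apply' _ (measurable_subtype_coe hs),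
    Measure.toSphere_apply' _ (measurable_subtype_coe hes)]
  congr 2
  have key : (Set.Ioo (0 : ℝ) 1 • ((Subtype.val : sphere (0 : EuclideanSpace ℝ (Fin b)) 1 → _) ''
        (Subtype.val ⁻¹' (e ⁻¹' s)))) =
      e ⁻¹' (Set.Ioo (0 : ℝ) 1 • ((Subtype.val : sphere (0 : EuclideanSpace ℝ (Fin b)) 1 → _) ''
        (Subtype.val ⁻¹' s))) := by
    ext x
    simp only [Set.mem_smul, Set.mem_preimage, Subtype.image_preimage_coe, Set.mem_inter_iff,
      mem_sphere_zero_iff_norm]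
    constructor
    · rintro ⟨r, hr, y, ⟨hy1, hy2⟩, rfl⟩
      exact ⟨r, hr, e y, ⟨by simpa using hy1, hy2⟩, by simp⟩
    · rintro ⟨r, hr, y, ⟨hy1, hy2⟩, h⟩
      refine ⟨r, hr, e.symm y, ⟨by simpa using hy1, by simpa using hy2⟩, ?_⟩
      rw [← map_smul, h, e.symm_apply_apply]
  rw [key]
  exact e.measurePreserving.measure_preimage_equiv (f := e.toMeasurableEquiv) _

lemma integral_comp_uniformSphere {b : ℕ}
    (e : EuclideanSpace ℝ (Fin b) ≃ₗᵢ[ℝ] EuclideanSpace ℝ (Fin b))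
    (f : EuclideanSpace ℝ (Fin b) → ℝ) :
    ∫ u, f (e u) ∂uniformSphere b = ∫ u, f u ∂uniformSphere b := by
  conv_rhs => rw [← map_uniformSphere e]
  exact (integral_map_equiv e.toMeasurableEquiv f).symm

lemma integral_uniformSphere_odd {b : ℕ} (f : EuclideanSpace ℝ (Fin b) → ℝ)
    (hf : ∀ u, f (-u) = -f u) : ∫ u, f u ∂uniformSphere b = 0 := by
  have h := integral_comp_uniformSphere (LinearIsometryEquiv.neg ℝ) f
  simp only [LinearIsometryEquiv.coe_neg, hf, integral_neg] at h
  linarith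

lemma integrable_uniformSphere {b : ℕ} (hb : 1 ≤ b) (f : EuclideanSpace ℝ (Fin b) → ℝ)
    (hf : Continuous f) : Integrable f (uniformSphere b) := by
  have := isProbabilityMeasure_uniformSphere hb
  obtain ⟨K, hK⟩ := (isCompact_sphere (0 : EuclideanSpace ℝ (Fin b)) 1).exists_bound_of_continuousOn
    hf.continuousOn
  refine Integrable.of_bound hf.aestronglyMeasurable K ?_
  filter_upwards [ae_norm_uniformSphere b] with u hu
  exact hK u (by simpa using hu)

/-- By rotation invariance the integral depends on `‖s‖` only, and the integrals for the
`b` vectors `‖s‖ • eᵢ` sum to `‖s‖ ^ 2`. -/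
lemma integral_inner_sq_uniformSphere {b : ℕ} (hb : 1 ≤ b) (s : EuclideanSpace ℝ (Fin b)) :
    ∫ u, ⟪u, s⟫ ^ 2 ∂uniformSphere b = ‖s‖ ^ 2 / b := by
  have := isProbabilityMeasure_uniformSphere hb
  have hb0 : (b : ℝ) ≠ 0 := by positivity
  let B := EuclideanSpace.basisFun (Fin b) ℝ
  have h1 : ∀ i, ∫ u, ⟪u, s⟫ ^ 2 ∂uniformSphere b =
      ‖s‖ ^ 2 * ∫ u, ⟪B i, u⟫ ^ 2 ∂uniformSphere b := by
    intro i
    have hn : ‖‖s‖ • B i‖ = ‖s‖ := by simp [norm_smul, B.norm_eq_one]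
    let e := (ℝ ∙ (‖s‖ • B i - s))ᗮ.reflection
    have he : e (‖s‖ • B i) = s := Submodule.reflection_sub hn
    rw [← integral_comp_uniformSphere e, ← integral_const_mul]
    refine integral_congr_ae (.of_forall fun u => ?_)
    have : ⟪e u, s⟫ = ⟪u, ‖s‖ • B i⟫ := by
      conv_lhs => rw [← he, e.inner_map_map]
    simp only [this, inner_smul_right, mul_pow, real_inner_comm]
  have h2 : ∑ i, ∫ u, ⟪B i, u⟫ ^ 2 ∂uniformSphere b = 1 := by
    rw [← integral_finsetSum _ fun i _ => integrable_uniformSphere hb _ (by fun_prop)]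
    have : ∀ᵐ u ∂uniformSphere b, ∑ i, ⟪B i, u⟫ ^ 2 = 1 := by
      filter_upwards [ae_norm_uniformSphere b] with u hu
      rw [B.sum_sq_inner_right, hu, one_pow]
    rw [integral_congr_ae this]
    simp
  have h3 : (b : ℝ) * ∫ u, ⟪u, s⟫ ^ 2 ∂uniformSphere b = ‖s‖ ^ 2 := by
    calc (b : ℝ) * ∫ u, ⟪u, s⟫ ^ 2 ∂uniformSphere b
        = ∑ i : Fin b, ∫ u, ⟪u, s⟫ ^ 2 ∂uniformSphere b := by simp
      _ = ‖s‖ ^ 2 := by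
        rw [Finset.sum_congr rfl fun i _ => h1 i, ← Finset.mul_sum, h2, mul_one]
  field_simp
  linarith

lemma integral_inner_mul_inner_uniformSphere {b : ℕ} (hb : 1 ≤ b)
    (s w : EuclideanSpace ℝ (Fin b)) :
    ∫ u, ⟪u, s⟫ * ⟪u, w⟫ ∂uniformSphere b = ⟪s, w⟫ / b := by
  have h : ∀ u : EuclideanSpace ℝ (Fin b),
      ⟪u, s⟫ * ⟪u, w⟫ = (⟪u, s + w⟫ ^ 2 - ⟪u, s - w⟫ ^ 2) / 4 := by
    intro u
    rw [inner_add_right, inner_sub_right]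
    ring
  simp_rw [h]
  rw [integral_div, integral_sub (integrable_uniformSphere hb _ (by fun_prop))
    (integrable_uniformSphere hb _ (by fun_prop)), integral_inner_sq_uniformSphere hb,
    integral_inner_sq_uniformSphere hb, norm_add_sq_real, norm_sub_sq_real]
  ring

/-- The one-point gradient estimate is unbiased for a quadratic loss: the constant and the
quadratic terms of the loss in `u` contribute odd functions of `u`, which integrate to zero, and
the linear term contributes the second moment. -/
lemma integral_onePoint_estimate {b : ℕ} (hb : 1 ≤ b) (p s w : EuclideanSpace ℝ (Fin b))
    (a δ : ℝ) :
    ∫ u, (⟪p + δ • u, s⟫ - a) ^ 2 * ⟪u, w⟫ ∂uniformSphere b =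
      2 * (⟪p, s⟫ - a) * δ * (⟪s, w⟫ / b) := by
  have h : ∀ u : EuclideanSpace ℝ (Fin b), (⟪p + δ • u, s⟫ - a) ^ 2 * ⟪u, w⟫ =
      ((⟪p, s⟫ - a) ^ 2 + δ ^ 2 * ⟪u, s⟫ ^ 2) * ⟪u, w⟫ +
        2 * (⟪p, s⟫ - a) * δ * (⟪u, s⟫ * ⟪u, w⟫) := by
    intro u
    rw [inner_add_left, real_inner_smul_left]
    ring
  simp_rw [h]
  rw [integral_add (integrable_uniformSphere hb _ (by fun_prop))
    (integrable_uniformSphere hb _ (by fun_prop)), integral_const_mul,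
    integral_inner_mul_inner_uniformSphere hb, integral_uniformSphere_odd _ fun u => ?_, zero_add]
  simp only [inner_neg_left]
  ring

/-! ### Integrating out one coordinate of a product measure -/

lemma measurePreserving_update {ι E : Type*} [Fintype ι] [DecidableEq ι] [MeasurableSpace E]
    (μ : Measure E) [IsProbabilityMeasure μ] (i : ι) :
    MeasurePreserving (fun p : (ι → E) × E => Function.update p.1 i p.2)
      ((Measure.pi fun _ => μ).prod μ) (Measure.pi fun _ => μ) := by
  have hm : Measurable (fun p : (ι → E) × E => Function.update p.1 i p.2) := by
    refine measurable_pi_lambda _ fun j => ?_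
    by_cases h : j = i
    · subst h; simpa using measurable_snd
    · simp only [Function.update_of_ne h]
      exact (measurable_pi_apply j).comp measurable_fst
  refine ⟨hm, (Measure.pi_eq fun s hs => ?_).symm⟩
  rw [Measure.map_apply hm (.univ_pi hs)]
  have : (fun p : (ι → E) × E => Function.update p.1 i p.2) ⁻¹' Set.univ.pi s =
      (Set.univ.pi (Function.update s i Set.univ)) ×ˢ s i := by
    ext ⟨ω, v⟩
    simp only [Set.mem_preimage, Set.mem_pi, Set.mem_univ, true_imp_iff, Set.mem_prod]
    constructor
    · intro h
      refine ⟨fun j => ?_, by simpa using h i⟩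
      by_cases hj : j = i
      · subst hj; simp
      · simpa [Function.update_of_ne hj] using h j
    · rintro ⟨h, hv⟩ j
      by_cases hj : j = i
      · subst hj; simpa using hv
      · simpa [Function.update_of_ne hj] using h j
  rw [this, Measure.prod_prod, Measure.pi_pi, ← Finset.mul_prod_erase _ _ (Finset.mem_univ i),
    ← Finset.mul_prod_erase _ (fun j => μ (s j)) (Finset.mem_univ i)]
  rw [Finset.prod_congr rfl fun j hj => by rw [Function.update_of_ne (Finset.ne_of_mem_erase hj)]]
  simp [mul_comm]

lemma integral_pi_update {ι E : Type*} [Fintype ι] [DecidableEq ι] [MeasurableSpace E]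
    (μ : Measure E) [IsProbabilityMeasure μ] (i : ι) (f : (ι → E) → ℝ)
    (hf : Integrable f (Measure.pi fun _ => μ)) :
    ∫ ω, f ω ∂(Measure.pi fun _ => μ) =
      ∫ ω, ∫ v, f (Function.update ω i v) ∂μ ∂(Measure.pi fun _ => μ) := by
  have hp := measurePreserving_update μ i
  have hi := hp.integrable_comp_of_integrable hf
  rw [← integral_prod (fun p : (ι → E) × E => f (Function.update p.1 i p.2)) hi]
  conv_lhs => rw [← hp.map_eq]
  exact integral_map hp.measurable.aemeasurable (hp.map_eq.symm ▸ hf.aestronglyMeasurable)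

/-! ### Projections onto convex sets -/

section Projection

variable {F : Type*} [NormedAddCommGroup F] [InnerProductSpace ℝ F] {Θ : Set F}

lemma IsProjection.inner_le_zero (hΘ : Convex ℝ Θ) {x y : F} (h : IsProjection Θ x y) :
    ∀ z ∈ Θ, ⟪x - y, z - y⟫ ≤ 0 := by
  rw [← norm_eq_iInf_iff_real_inner_le_zero hΘ h.1]
  have : Nonempty Θ := ⟨⟨y, h.1⟩⟩
  refine le_antisymm (le_ciInf fun z => ?_)
    (ciInf_le (f := fun w : Θ => ‖x - w‖) ⟨0, ?_⟩ ⟨y, h.1⟩)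
  · rw [norm_sub_rev, norm_sub_rev x]
    exact h.2 z z.2
  · rintro _ ⟨z, rfl⟩
    positivity

lemma IsProjection.unique (hΘ : Convex ℝ Θ) {x y y' : F} (h : IsProjection Θ x y)
    (h' : IsProjection Θ x y') : y = y' := by
  have h1 := h.inner_le_zero hΘ y' h'.1
  have h2 := h'.inner_le_zero hΘ y h.1
  have h3 : ⟪y' - y, y' - y⟫ = ⟪x - y, y' - y⟫ + ⟪x - y', y - y'⟫ := by
    simp only [inner_sub_left, inner_sub_right]
    ring
  have h4 : ⟪y' - y, y' - y⟫ = 0 := le_antisymm (by linarith) real_inner_self_nonneg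
  exact (sub_eq_zero.1 (inner_self_eq_zero.1 h4)).symm

lemma IsProjection.norm_sub_sq_le (hΘ : Convex ℝ Θ) {x y z : F} (h : IsProjection Θ x y)
    (hz : z ∈ Θ) : ‖y - z‖ ^ 2 ≤ ‖x - z‖ ^ 2 := by
  have h1 := h.inner_le_zero hΘ z hz
  have h2 : x - z = (x - y) - (z - y) := by abel
  rw [h2, norm_sub_sq_real (x - y), norm_sub_rev y z]
  nlinarith [sq_nonneg ‖x - y‖]

/-- The standard one-step inequality of projected gradient descent with gradient estimate
`k • u`, where `u` is a unit vector. -/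
lemma IsProjection.descent (hΘ : Convex ℝ Θ) {p u y z : F} {α k G : ℝ}
    (h : IsProjection Θ (p - (α * k) • u) y) (hz : z ∈ Θ) (hu : ‖u‖ = 1) (hk : k ^ 2 ≤ G) :
    ‖y - z‖ ^ 2 ≤ ‖p - z‖ ^ 2 - 2 * α * (k * ⟪u, p - z⟫) + α ^ 2 * G := by
  refine (h.norm_sub_sq_le hΘ hz).trans ?_
  have h2 : p - (α * k) • u - z = (p - z) - (α * k) • u := by abel
  rw [h2, norm_sub_sq_real, norm_smul, hu, real_inner_smul_right, real_inner_comm, mul_one,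
    Real.norm_eq_abs, sq_abs]
  nlinarith [mul_le_mul_of_nonneg_left hk (sq_nonneg α)]

end Projection

/-! ### The algorithm -/

/-- Since projections onto a convex set are unique, the iterate of round `i` is a function of the
samples of the rounds before `i`. -/
lemma iterate_congr {b T : ℕ} {Θ : Set (EuclideanSpace ℝ (Fin b))} (hΘ : Convex ℝ Θ)
    {θinit : EuclideanSpace ℝ (Fin b)}
    {θ : ℕ → (Fin T → EuclideanSpace ℝ (Fin b)) → EuclideanSpace ℝ (Fin b)}
    (step : ℕ → EuclideanSpace ℝ (Fin b) → EuclideanSpace ℝ (Fin b) → EuclideanSpace ℝ (Fin b))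
    (h0 : ∀ ω, θ 0 ω = θinit)
    (hstep : ∀ i, ∀ hi : i < T, ∀ ω,
      IsProjection Θ (step i (θ i ω) (ω ⟨i, hi⟩)) (θ (i + 1) ω))
    (i : ℕ) (hi : i ≤ T) (ω ω₂ : Fin T → EuclideanSpace ℝ (Fin b))
    (h : ∀ j : Fin T, (j : ℕ) < i → ω j = ω₂ j) : θ i ω = θ i ω₂ := by
  induction i with
  | zero => rw [h0, h0]
  | succ i ih =>
    have h1 := ih (by omega) fun j hj => h j (by omega)
    have h2 := hstep i (by omega) ω
    rw [h1, h ⟨i, by omega⟩ (by simp)] at h2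
    exact h2.unique hΘ (hstep i (by omega) ω₂)

/-- The expected one-round progress of the algorithm. The variables `p` and `q` stand for the
iterates before and after the round; `p` does not depend on the sample `ω i` of the round. -/
lemma round_bound {b T : ℕ} (hb : 1 ≤ b) {Θ : Set (EuclideanSpace ℝ (Fin b))}
    (hΘ : Convex ℝ Θ) {Cθ C δ α a : ℝ} (hδ : 0 < δ) (hα : 0 < α)
    (hbd : ∀ θ' ∈ Θ, ‖θ'‖ ≤ Cθ) {s : EuclideanSpace ℝ (Fin b)}
    (hC : ∀ θ' : EuclideanSpace ℝ (Fin b), ‖θ'‖ ≤ Cθ + δ → (⟪θ', s⟫ - a) ^ 2 ≤ C)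
    (i : Fin T) {p q : (Fin T → EuclideanSpace ℝ (Fin b)) → EuclideanSpace ℝ (Fin b)}
    (hpm : Measurable p) (hqm : Measurable q) (hp : ∀ ω, p ω ∈ Θ)
    (hpi : ∀ ω v, p (Function.update ω i v) = p ω)
    (hq : ∀ ω, IsProjection Θ
      (p ω - (α * ((⟪p ω + δ • ω i, s⟫ - a) ^ 2 * b / δ)) • ω i) (q ω))
    {x : EuclideanSpace ℝ (Fin b)} (hx : x ∈ Θ) :
    2 * α * (∫ ω, (⟪p ω, s⟫ - a) ^ 2 ∂(Measure.pi fun _ : Fin T => uniformSphere b)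
        - (⟪x, s⟫ - a) ^ 2) ≤
      (∫ ω, ‖p ω - x‖ ^ 2 ∂(Measure.pi fun _ : Fin T => uniformSphere b)) -
      (∫ ω, ‖q ω - x‖ ^ 2 ∂(Measure.pi fun _ : Fin T => uniformSphere b)) +
      α ^ 2 * (C * b / δ) ^ 2 := by
  have := isProbabilityMeasure_uniformSphere hb
  have hb0 : (b : ℝ) ≠ 0 := by positivity
  set P := Measure.pi fun _ : Fin T => uniformSphere b with hP
  have hCθ : 0 ≤ Cθ := (norm_nonneg x).trans (hbd x hx)
  have hdist : ∀ y ∈ Θ, ‖y - x‖ ≤ 2 * Cθ := fun y hy =>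
    (norm_sub_le _ _).trans (by linarith [hbd y hy, hbd x hx])
  have hintD : ∀ r : (Fin T → EuclideanSpace ℝ (Fin b)) → EuclideanSpace ℝ (Fin b),
      Measurable r → (∀ ω, r ω ∈ Θ) → Integrable (fun ω => ‖r ω - x‖ ^ 2) P := by
    intro r hr hrΘ
    refine Integrable.of_bound (by fun_prop) ((2 * Cθ) ^ 2) (.of_forall fun ω => ?_)
    rw [Real.norm_of_nonneg (by positivity)]
    exact pow_le_pow_left₀ (norm_nonneg _) (hdist _ (hrΘ ω)) 2
  have hintc : Integrable (fun ω => (⟪p ω, s⟫ - a) ^ 2) P := by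
    refine Integrable.of_bound (by fun_prop) C (.of_forall fun ω => ?_)
    rw [Real.norm_of_nonneg (by positivity)]
    exact hC _ ((hbd _ (hp ω)).trans (by linarith))
  have hunit : ∀ᵐ ω ∂P, ‖ω i‖ = 1 :=
    (Measure.quasiMeasurePreserving_eval (μ := fun _ : Fin T => uniformSphere b) i).ae
      (ae_norm_uniformSphere b)
  have hplay : ∀ ω : Fin T → EuclideanSpace ℝ (Fin b), ‖ω i‖ = 1 →
      (⟪p ω + δ • ω i, s⟫ - a) ^ 2 ≤ C := by
    intro ω hω
    refine hC _ ((norm_add_le _ _).trans (add_le_add (hbd _ (hp ω)) ?_))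
    rw [norm_smul, hω, Real.norm_of_nonneg hδ.le, mul_one]
  have hCnn : 0 ≤ C := (sq_nonneg _).trans (hC x ((hbd x hx).trans (by linarith)))
  have hintF : Integrable
      (fun ω => (⟪p ω + δ • ω i, s⟫ - a) ^ 2 * ⟪ω i, p ω - x⟫) P := by
    refine Integrable.of_bound (by fun_prop) (C * (2 * Cθ)) ?_
    filter_upwards [hunit] with ω hω
    rw [norm_mul, Real.norm_of_nonneg (sq_nonneg _)]
    refine mul_le_mul (hplay ω hω) ?_ (norm_nonneg _) hCnn
    refine (norm_inner_le_norm _ _).trans ?_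
    rw [hω, one_mul]
    exact hdist _ (hp ω)
  -- Conditionally on the other samples, the gradient estimate is unbiased.
  have hF : ∫ ω, (⟪p ω + δ • ω i, s⟫ - a) ^ 2 * ⟪ω i, p ω - x⟫ ∂P =
      ∫ ω, δ / b * (2 * (⟪p ω, s⟫ - a) * ⟪s, p ω - x⟫) ∂P := by
    rw [hP, integral_pi_update (uniformSphere b) i _ hintF]
    refine integral_congr_ae (.of_forall fun ω => ?_)
    simp only [hpi, Function.update_self]
    rw [integral_onePoint_estimate hb]
    ring
  have hlow : δ / b * ∫ ω, (⟪p ω, s⟫ - a) ^ 2 - (⟪x, s⟫ - a) ^ 2 ∂P ≤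
      ∫ ω, (⟪p ω + δ • ω i, s⟫ - a) ^ 2 * ⟪ω i, p ω - x⟫ ∂P := by
    rw [hF, ← integral_const_mul]
    have hcx : Integrable (fun ω => δ / b * ((⟪p ω, s⟫ - a) ^ 2 - (⟪x, s⟫ - a) ^ 2)) P :=
      (hintc.sub (integrable_const _)).const_mul _
    have hsq : Integrable (fun ω => ⟪s, p ω - x⟫ ^ 2) P := by
      refine Integrable.of_bound (by fun_prop) ((‖s‖ * (2 * Cθ)) ^ 2) (.of_forall fun ω => ?_)
      rw [norm_pow]
      refine pow_le_pow_left₀ (norm_nonneg _) ((norm_inner_le_norm _ _).trans ?_) 2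
      exact mul_le_mul_of_nonneg_left (hdist _ (hp ω)) (norm_nonneg _)
    have hid : ∀ ω, δ / b * (2 * (⟪p ω, s⟫ - a) * ⟪s, p ω - x⟫) =
        δ / b * ((⟪p ω, s⟫ - a) ^ 2 - (⟪x, s⟫ - a) ^ 2) + δ / b * ⟪s, p ω - x⟫ ^ 2 := by
      intro ω
      rw [inner_sub_right, real_inner_comm s (p ω), real_inner_comm s x]
      ring
    simp_rw [hid]
    refine integral_mono hcx (hcx.add (hsq.const_mul _)) fun ω => ?_
    have : 0 ≤ δ / b * ⟪s, p ω - x⟫ ^ 2 := by positivity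
    simpa using this
  have hintDF : Integrable (fun ω => ‖p ω - x‖ ^ 2 -
      2 * α * (b / δ) * ((⟪p ω + δ • ω i, s⟫ - a) ^ 2 * ⟪ω i, p ω - x⟫)) P :=
    (hintD p hpm hp).sub (hintF.const_mul _)
  have hdesc : ∫ ω, ‖q ω - x‖ ^ 2 ∂P ≤ ∫ ω, (‖p ω - x‖ ^ 2 -
      2 * α * (b / δ) * ((⟪p ω + δ • ω i, s⟫ - a) ^ 2 * ⟪ω i, p ω - x⟫) +
        α ^ 2 * (C * b / δ) ^ 2) ∂P := by
    refine integral_mono_ae (hintD q hqm fun ω => (hq ω).1)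
      (hintDF.add (integrable_const _)) ?_
    filter_upwards [hunit] with ω hω
    have hk : ((⟪p ω + δ • ω i, s⟫ - a) ^ 2 * b / δ) ^ 2 ≤ (C * b / δ) ^ 2 := by
      have := hplay ω hω
      gcongr
    refine ((hq ω).descent hΘ hx hω hk).trans_eq ?_
    ring
  rw [integral_add hintDF (integrable_const _),
    integral_sub (hintD p hpm hp) (hintF.const_mul _), integral_const_mul] at hdesc
  rw [integral_sub hintc (integrable_const _)] at hlow
  simp only [integral_const, probReal_univ, one_smul] at hdesc hlow
  have h3 := mul_le_mul_of_nonneg_left hlow (show 0 ≤ 2 * α * (b / δ) by positivity)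
  have h4 : 2 * α * (b / δ) * (δ / b * (∫ ω, (⟪p ω, s⟫ - a) ^ 2 ∂P - (⟪x, s⟫ - a) ^ 2)) =
      2 * α * (∫ ω, (⟪p ω, s⟫ - a) ^ 2 ∂P - (⟪x, s⟫ - a) ^ 2) := by
    field_simp
  rw [h4] at h3
  linarith

/-- Substitution of the step size and the perturbation into the summed regret bound. Here `R` is
the regret, `B` the dimension and `M` stands for `C ^ 2 + Cs ^ 2`; in terms of `t = T ^ (-1 / 4)`
both sides become rational functions of `t`, `√B` and `√(Cθ M / (2 L))`. -/
lemma parameter_arith {Cθ M C L t B δ α R : ℝ} {T : ℕ} (hT : 1 ≤ T) (hCθ : 0 < Cθ) (hM : 0 < M)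
    (hL : 0 < L) (hB : 0 < B)
    (ht : t = (T : ℝ) ^ (-(1 : ℝ) / 4))
    (hδ : δ = t * Real.sqrt (Cθ * B * M / (2 * L)))
    (hα : α = Cθ * δ / (B * M * Real.sqrt T))
    (h : 2 * α * R ≤ (2 * Cθ) ^ 2 + T * (α ^ 2 * (C * B / δ) ^ 2)) :
    1 / (T : ℝ) * R ≤
      Cθ * (2 * M + C ^ 2 / (2 * M)) / Real.sqrt (Cθ * M / (2 * L)) * Real.sqrt B * t := by
  have hT0 : (0 : ℝ) < T := by exact_mod_cast hT
  have htpos : 0 < t := ht ▸ Real.rpow_pos_of_pos hT0 _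
  have ht4 : t ^ 4 * T = 1 := by
    rw [ht, ← Real.rpow_natCast, ← Real.rpow_mul hT0.le]
    norm_num
    rw [Real.rpow_neg_one]
    field_simp
  have hT4 : (T : ℝ) = 1 / t ^ 4 := by
    field_simp
    linarith
  have hsT : Real.sqrt T = 1 / t ^ 2 := by
    rw [hT4, show 1 / t ^ 4 = (1 / t ^ 2) ^ 2 by ring, Real.sqrt_sq (by positivity)]
  have hsB : Real.sqrt (Cθ * B * M / (2 * L)) = Real.sqrt B * Real.sqrt (Cθ * M / (2 * L)) := by
    rw [← Real.sqrt_mul hB.le]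
    ring_nf
  rw [hsB] at hδ
  have hK : 0 < Real.sqrt (Cθ * M / (2 * L)) := Real.sqrt_pos.2 (by positivity)
  have hb : 0 < Real.sqrt B := Real.sqrt_pos.2 hB
  have hbB : B = Real.sqrt B ^ 2 := (Real.sq_sqrt hB.le).symm
  generalize Real.sqrt (Cθ * M / (2 * L)) = K at *
  generalize Real.sqrt B = β at *
  subst hbB
  rw [hsT] at hα
  rw [hT4] at h ⊢
  have hα' : α = Cθ * K * t ^ 3 / (β * M) := by
    rw [hα, hδ]
    field_simp
  have hαpos : 0 < α := by rw [hα']; positivity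
  refine le_of_mul_le_mul_left ?_ (show 0 < 2 * α / t ^ 4 by positivity)
  calc 2 * α / t ^ 4 * (1 / (1 / t ^ 4) * R) = 2 * α * R := by field_simp
    _ ≤ _ := h
    _ = _ := by
      rw [hα', hδ]
      field_simp

/-- average regret of bandit gradient descent (exploration in parameter
space) for online linear regression with partial information.  The algorithm's
randomness is a sequence of `T` i.i.d. uniform samples from the unit sphere (product
measure); `θ i ω` is the iterate at round `i`, and round `i` plays `θ i ω + δ • u_i`. -/
theorem parameter_space_exploration_regret (Cθ Cs Ca C L : ℝ)
    (hCθ : 0 < Cθ) (hCs : 0 < Cs) (hCa : 0 ≤ Ca) (hC : 0 < C) (hL : 0 < L) :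
    ∃ κ > 0, ∀ (b T : ℕ), 1 ≤ b → 1 ≤ T →
      ∀ (s : ℕ → EuclideanSpace ℝ (Fin b)) (a : ℕ → ℝ),
        (∀ i < T, ‖s i‖ ≤ Cs) → (∀ i < T, |a i| ≤ Ca) →
      ∀ Θ : Set (EuclideanSpace ℝ (Fin b)),
        Θ.Nonempty → IsClosed Θ → Convex ℝ Θ → (∀ θ' ∈ Θ, ‖θ'‖ ≤ Cθ) →
      ∀ δ α : ℝ,
        δ = (T : ℝ) ^ (-(1 : ℝ) / 4) * Real.sqrt (Cθ * b * (C ^ 2 + Cs ^ 2) / (2 * L)) →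
        α = Cθ * δ / (b * (C ^ 2 + Cs ^ 2) * Real.sqrt T) →
        (∀ i < T, ∀ θ' : EuclideanSpace ℝ (Fin b), ‖θ'‖ ≤ Cθ + δ →
          (⟪θ', s i⟫ - a i) ^ 2 ≤ C) →
        (∀ i < T, ∀ θ₁ θ₂ : EuclideanSpace ℝ (Fin b), ‖θ₁‖ ≤ Cθ + δ → ‖θ₂‖ ≤ Cθ + δ →
          |(⟪θ₁, s i⟫ - a i) ^ 2 - (⟪θ₂, s i⟫ - a i) ^ 2| ≤ L * ‖θ₁ - θ₂‖) →
      ∀ θinit : EuclideanSpace ℝ (Fin b), θinit ∈ Θ →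
      ∀ θ : ℕ → (Fin T → EuclideanSpace ℝ (Fin b)) → EuclideanSpace ℝ (Fin b),
        (∀ i, Measurable (θ i)) →
        (∀ ω, θ 0 ω = θinit) →
        (∀ i, ∀ hi : i < T, ∀ ω, IsProjection Θ
          (θ i ω -
            (α * ((⟪θ i ω + δ • ω ⟨i, hi⟩, s i⟫ - a i) ^ 2 * b / δ)) • ω ⟨i, hi⟩)
          (θ (i + 1) ω)) →
        (1 / (T : ℝ)) *
            ((∫ ω, ∑ i ∈ Finset.range T, (⟪θ i ω, s i⟫ - a i) ^ 2
                ∂(Measure.pi fun _ : Fin T => uniformSphere b))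
              - ⨅ θstar : Θ, ∑ i ∈ Finset.range T,
                  (⟪(θstar : EuclideanSpace ℝ (Fin b)), s i⟫ - a i) ^ 2)
          ≤ κ * Real.sqrt b * (T : ℝ) ^ (-(1 : ℝ) / 4) := by
  refine ⟨Cθ * (2 * (C ^ 2 + Cs ^ 2) + C ^ 2 / (2 * (C ^ 2 + Cs ^ 2))) /
    Real.sqrt (Cθ * (C ^ 2 + Cs ^ 2) / (2 * L)), by positivity, ?_⟩
  intro b T hb hT s a _ _ Θ hne _ hconv hbd δ α hδ hα hC' _ θinit hinit θ hmeas h0 hstep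
  have := isProbabilityMeasure_uniformSphere hb
  have hT0 : (0 : ℝ) < T := by exact_mod_cast hT
  have hb0 : (0 : ℝ) < b := by exact_mod_cast hb
  have hδ0 : 0 < δ := by rw [hδ]; positivity
  have hα0 : 0 < α := by rw [hα]; positivity
  have hmem : ∀ i ≤ T, ∀ ω, θ i ω ∈ Θ := by
    intro i hi ω
    cases i with
    | zero => rw [h0]; exact hinit
    | succ i => exact (hstep i hi ω).1
  set P := Measure.pi fun _ : Fin T => uniformSphere b with hP
  have hint : ∀ i ∈ Finset.range T, Integrable (fun ω => (⟪θ i ω, s i⟫ - a i) ^ 2) P := by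
    intro i hi
    have hi := Finset.mem_range.1 hi
    have hm := hmeas i
    refine Integrable.of_bound (by fun_prop) C (.of_forall fun ω => ?_)
    rw [Real.norm_of_nonneg (by positivity)]
    exact hC' i hi _ ((hbd _ (hmem i hi.le ω)).trans (by linarith))
  rw [integral_finsetSum _ hint]
  have : Nonempty Θ := hne.to_subtype
  refine parameter_arith hT hCθ (by positivity) hL hb0 rfl (C := C) hδ hα ?_
  -- It suffices to compare with each fixed comparator `x`.
  suffices hx : ∀ x : Θ, (∑ i ∈ Finset.range T, ∫ ω, (⟪θ i ω, s i⟫ - a i) ^ 2 ∂P) -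
      ((2 * Cθ) ^ 2 + T * (α ^ 2 * (C * b / δ) ^ 2)) / (2 * α) ≤
        ∑ i ∈ Finset.range T, (⟪(x : EuclideanSpace ℝ (Fin b)), s i⟫ - a i) ^ 2 by
    have := le_ciInf hx
    rw [← le_div_iff₀' (by positivity)]
    linarith
  rintro ⟨x, hx⟩
  have hround : ∀ i ∈ Finset.range T,
      2 * α * (∫ ω, (⟪θ i ω, s i⟫ - a i) ^ 2 ∂P - (⟪x, s i⟫ - a i) ^ 2) ≤
        (∫ ω, ‖θ i ω - x‖ ^ 2 ∂P - ∫ ω, ‖θ (i + 1) ω - x‖ ^ 2 ∂P) +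
          α ^ 2 * (C * b / δ) ^ 2 := by
    intro i hi
    have hi := Finset.mem_range.1 hi
    refine round_bound hb hconv hδ0 hα0 hbd (hC' i hi) ⟨i, hi⟩ (hmeas i) (hmeas (i + 1))
      (hmem i hi.le) (fun ω v => ?_) (hstep i hi) hx
    refine iterate_congr hconv
      (fun i p u => p - (α * ((⟪p + δ • u, s i⟫ - a i) ^ 2 * b / δ)) • u) h0 hstep i hi.le _ _ ?_
    intro j hj
    exact Function.update_of_ne (fun h => by simp [h] at hj) _ _
  have hsum := Finset.sum_le_sum hround
  rw [← Finset.mul_sum, Finset.sum_sub_distrib, Finset.sum_add_distrib, Finset.sum_range_sub',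
    Finset.sum_const, Finset.card_range, nsmul_eq_mul] at hsum
  have hinit' : ∫ ω, ‖θ 0 ω - x‖ ^ 2 ∂P ≤ (2 * Cθ) ^ 2 := by
    simp only [h0, integral_const, probReal_univ, one_smul]
    exact pow_le_pow_left₀ (norm_nonneg _)
      ((norm_sub_le _ _).trans (by linarith [hbd _ hinit, hbd x hx])) 2
  have hend : 0 ≤ ∫ ω, ‖θ T ω - x‖ ^ 2 ∂P := integral_nonneg fun ω => by positivity
  rw [sub_le_comm, le_div_iff₀' (by positivity)]
  linarith
end

section
/- Let f : R^d -> R be differentiable, G-Lipschitz, and L-smooth, fix theta_0 in R^d, and let Delta_0 = f(theta_0) - inf_theta f(theta) (assumed finite). Run stochastic gradient descent theta_{i+1} = theta_i - alpha*g_i for T steps, where each stochastic gradient g_i is adapted to the algorithm's history and satisfies, conditional on the history up to iteration i-1: E_i[g_i] = grad f(theta_i) and E_i[||g_i - grad f(theta_i)||^2] <= V for a constant V > 0. Then with step size alpha = sqrt(2*Delta_0/(L*T*(V + G^2))), we have (1/T)*sum_{i=1}^T E||grad f(theta_i)||^2 <= 2*sqrt(2*Delta_0*L*(V + G^2)) /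 sqrt(T). -/
open MeasureTheory

/-!
Since `∇f` is `L`-Lipschitz, the mean value inequality gives the descent estimate
`f y ≤ f x + ⟪∇f x, y - x⟫ + L ‖y - x‖²` (`le_add_inner_gradient_add_sq`). Along an SGD step
`y = x - α • g` its expectation can be computed by conditioning on the history: unbiasedness
turns the inner product into `-α E‖∇f(θ i)‖²`, and since the noise `g i - ∇f(θ i)` is
orthogonal to `∇f(θ i)`, one has `E‖g i‖² ≤ V + G²` (`conditional_moments`). Hence
`α E‖∇f(θ i)‖² ≤ E f(θ i) - E f(θ (i+1)) + L α² (V + G²)`, and telescoping over `T` steps bounds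
`α ∑ E‖∇f(θ i)‖²` by `Δ₀ + L T α² (V + G²) = 3 Δ₀`. The sharp descent estimate has `L / 2`
in place of `L`, but the claimed rate only requires the bound `4 Δ₀`.

If `Δ₀ = 0` then `α = 0`, so one cannot divide by `α`; in that case `θ₀` minimises `f`, the
iterates never move, and the gradient vanishes along them.
-/

open InnerProductSpace in
/-- Descent estimate for a function with `L`-Lipschitz gradient, with `L` instead of the optimal
constant `L / 2`. -/
lemma le_add_inner_gradient_add_sq {E : Type*} [NormedAddCommGroup E] [InnerProductSpace ℝ E]
    [CompleteSpace E] {f : E → ℝ} {L : ℝ} (hL : 0 ≤ L) (hdiff : Differentiable ℝ f)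
    (hsmooth : ∀ x y, ‖gradient f x - gradient f y‖ ≤ L * ‖x - y‖) (x y : E) :
    f y ≤ f x + inner ℝ (gradient f x) (y - x) + L * ‖y - x‖ ^ 2 := by
  have hbound : ∀ z ∈ segment ℝ x y, ‖fderiv ℝ f z - fderiv ℝ f x‖ ≤ L * ‖y - x‖ := by
    intro z hz
    rw [← toDual_gradient, ← toDual_gradient, ← map_sub, LinearIsometryEquiv.norm_map]
    refine (hsmooth z x).trans (mul_le_mul_of_nonneg_left ?_ hL)
    simpa using norm_sub_le_of_mem_segment hz
  have h := (convex_segment x y).norm_image_sub_le_of_norm_fderiv_le'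
    (fun z _ => hdiff z) hbound (left_mem_segment ℝ x y) (right_mem_segment ℝ x y)
  rw [← inner_gradient_left, Real.norm_eq_abs] at h
  linarith [le_of_abs_le h, show L * ‖y - x‖ * ‖y - x‖ = L * ‖y - x‖ ^ 2 by ring]

open InnerProductSpace in
lemma norm_gradient_le_of_lipschitz {E : Type*} [NormedAddCommGroup E] [InnerProductSpace ℝ E]
    [CompleteSpace E] {f : E → ℝ} {G : ℝ} (hG : 0 ≤ G)
    (hlip : ∀ x y, |f x - f y| ≤ G * ‖x - y‖) (x : E) : ‖gradient f x‖ ≤ G := by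
  rw [← LinearIsometryEquiv.norm_map (toDual ℝ E), toDual_gradient]
  exact norm_fderiv_le_of_lip' ℝ hG (Filter.Eventually.of_forall fun y => hlip y x)

/-- Moments of an unbiased estimator `g` of a bounded `ℋ`-measurable vector `X` with conditional
variance at most `V`. Pulling `X` out of the conditional expectation gives `E⟪X, g⟫ = E‖X‖²`, so
that `E‖g‖² = E‖g - X‖² + E‖X‖²`. -/
lemma conditional_moments {E Ω : Type*} [NormedAddCommGroup E] [InnerProductSpace ℝ E]
    [CompleteSpace E] {ℋ m : MeasurableSpace Ω} (hℋ : ℋ ≤ m) {μ : Measure Ω}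
    [IsProbabilityMeasure μ] {X g : Ω → E} {G V : ℝ}
    (hX : StronglyMeasurable[ℋ] X) (hXG : ∀ ω, ‖X ω‖ ≤ G) (hg : Integrable g μ)
    (hg2 : Integrable (fun ω => ‖g ω - X ω‖ ^ 2) μ) (hmean : μ[g|ℋ] =ᵐ[μ] X)
    (hvar : ∀ᵐ ω ∂μ, (μ[fun ω' => ‖g ω' - X ω'‖ ^ 2|ℋ]) ω ≤ V) :
    Integrable (fun ω => inner ℝ (X ω) (g ω)) μ ∧
    (∫ ω, inner ℝ (X ω) (g ω) ∂μ = ∫ ω, ‖X ω‖ ^ 2 ∂μ) ∧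
    Integrable (fun ω => ‖g ω‖ ^ 2) μ ∧ ∫ ω, ‖g ω‖ ^ 2 ∂μ ≤ V + G ^ 2 := by
  have hXm : AEStronglyMeasurable X μ := (hX.mono hℋ).aestronglyMeasurable
  have hX2 : Integrable (fun ω => ‖X ω‖ ^ 2) μ := by
    refine Integrable.of_bound (hXm.norm.pow 2) (G ^ 2) (Filter.Eventually.of_forall fun ω => ?_)
    rw [Real.norm_of_nonneg (by positivity)]
    exact pow_le_pow_left₀ (norm_nonneg _) (hXG ω) 2
  have hXg : Integrable (fun ω => inner ℝ (X ω) (g ω)) μ := by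
    refine (hg.norm.const_mul G).mono' (hXm.inner hg.1) (Filter.Eventually.of_forall fun ω => ?_)
    exact (norm_inner_le_norm _ _).trans (mul_le_mul_of_nonneg_right (hXG ω) (norm_nonneg _))
  have hcross : ∫ ω, inner ℝ (X ω) (g ω) ∂μ = ∫ ω, ‖X ω‖ ^ 2 ∂μ := by
    rw [← integral_condExp hℋ]
    refine integral_congr_ae ?_
    have h := condExp_bilin_of_stronglyMeasurable_left (μ := μ) (innerSL ℝ) hX hXg hg
    filter_upwards [h, hmean] with ω h1 h2
    rw [h2] at h1
    exact h1.trans (real_inner_self_eq_norm_sq _)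
  have hnoise : ∫ ω, ‖g ω - X ω‖ ^ 2 ∂μ ≤ V := by
    rw [← integral_condExp hℋ]
    calc _ ≤ ∫ _, V ∂μ := integral_mono_ae integrable_condExp (integrable_const V) hvar
      _ = V := by simp
  have hXle : ∫ ω, ‖X ω‖ ^ 2 ∂μ ≤ G ^ 2 := by
    calc _ ≤ ∫ _, G ^ 2 ∂μ := integral_mono hX2 (integrable_const _)
            fun ω => pow_le_pow_left₀ (norm_nonneg _) (hXG ω) 2
      _ = G ^ 2 := by simp
  have hexp : (fun ω => ‖g ω‖ ^ 2) =
      fun ω => ‖g ω - X ω‖ ^ 2 + 2 * inner ℝ (X ω) (g ω) - ‖X ω‖ ^ 2 := by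
    funext ω
    rw [norm_sub_sq_real, real_inner_comm]
    ring
  refine ⟨hXg, hcross, ?_, ?_⟩
  · rw [hexp]
    exact (hg2.add (hXg.const_mul 2)).sub hX2
  · have hadd : Integrable (fun ω => ‖g ω - X ω‖ ^ 2 + 2 * inner ℝ (X ω) (g ω)) μ :=
      hg2.add (hXg.const_mul 2)
    rw [hexp, integral_sub hadd hX2, integral_add hg2 (hXg.const_mul 2), integral_const_mul, hcross]
    linarith

/-- convergence of SGD to a stationary point with the tuned step size
`α = √(2Δ₀/(L T (V+G²)))`.  `ℱ` is the filtration of histories, `g i` is the stochastic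
gradient used at step `i` (measurable with respect to `ℱ (i+1)`), and the conditional
mean and variance conditions are expressed with conditional expectations. -/
theorem sgd_convergence_rate (d T : ℕ) (hT : 1 ≤ T)
    (G L V α : ℝ) (hG : 0 ≤ G) (hL : 0 < L) (hV : 0 < V)
    (f : EuclideanSpace ℝ (Fin d) → ℝ)
    (hdiff : Differentiable ℝ f)
    (hlip : ∀ x y, |f x - f y| ≤ G * ‖x - y‖)
    (hsmooth : ∀ x y, ‖gradient f x - gradient f y‖ ≤ L * ‖x - y‖)
    (hbdd : BddBelow (Set.range f))
    (θ₀ : EuclideanSpace ℝ (Fin d)) (Δ₀ : ℝ) (hΔ₀ : Δ₀ = f θ₀ - ⨅ θ, f θ)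
    (hα : α = Real.sqrt (2 * Δ₀ / (L * T * (V + G ^ 2))))
    (Ω : Type*) (m : MeasurableSpace Ω) (μ : Measure Ω) (hprob : IsProbabilityMeasure μ)
    (ℱ : Filtration ℕ m)
    (g θ : ℕ → Ω → EuclideanSpace ℝ (Fin d))
    (hθ0 : ∀ ω, θ 0 ω = θ₀)
    (hupd : ∀ i < T, ∀ ω, θ (i + 1) ω = θ i ω - α • g i ω)
    (hθadapt : ∀ i ≤ T, StronglyMeasurable[ℱ i] (θ i))
    (hgadapt : ∀ i < T, StronglyMeasurable[ℱ (i + 1)] (g i))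
    (hgint : ∀ i < T, Integrable (g i) μ)
    (hg2int : ∀ i < T, Integrable (fun ω => ‖g i ω - gradient f (θ i ω)‖ ^ 2) μ)
    (hmean : ∀ i < T, μ[g i|ℱ i] =ᵐ[μ] fun ω => gradient f (θ i ω))
    (hvar : ∀ i < T, ∀ᵐ ω ∂μ,
      (μ[fun ω' => ‖g i ω' - gradient f (θ i ω')‖ ^ 2|ℱ i]) ω ≤ V) :
    (1 / (T : ℝ)) * ∑ i ∈ Finset.range T, ∫ ω, ‖gradient f (θ i ω)‖ ^ 2 ∂μ
      ≤ 2 * Real.sqrt (2 * Δ₀ * L * (V + G ^ 2)) / Real.sqrt T := by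
  have hgradG := norm_gradient_le_of_lipschitz hG hlip
  have hgradcont : Continuous (gradient f) :=
    (LipschitzWith.of_dist_le_mul (K := ⟨L, hL.le⟩)
      fun x y => by rw [dist_eq_norm, dist_eq_norm]; exact hsmooth x y).continuous
  have hinf : ∀ x, f θ₀ - Δ₀ ≤ f x := fun x => by
    have := ciInf_le hbdd x
    linarith
  have hT0 : (0 : ℝ) < T := by exact_mod_cast hT
  have hC : 0 < V + G ^ 2 := by positivity
  have hΔnonneg : 0 ≤ Δ₀ := by linarith [hinf θ₀]
  rcases hΔnonneg.eq_or_lt with hΔ | hΔpos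
  · -- `Δ₀ = 0`: the step size vanishes and `θ₀` is a minimiser.
    have hα0 : α = 0 := by simp [hα, ← hΔ]
    have hconst : ∀ i ≤ T, ∀ ω, θ i ω = θ₀ := by
      intro i
      induction i with
      | zero => exact fun _ ω => hθ0 ω
      | succ i ih =>
        intro hi ω
        rw [hupd i hi ω, ih (by omega) ω, hα0, zero_smul, sub_zero]
    have hgrad0 : gradient f θ₀ = 0 := by
      have hmin : IsLocalMin f θ₀ := Filter.Eventually.of_forall fun x => by
        linarith [hinf x]
      simp [gradient, hmin.fderiv_eq_zero]
    have hsum : ∑ i ∈ Finset.range T, ∫ ω, ‖gradient f (θ i ω)‖ ^ 2 ∂μ = 0 := by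
      refine Finset.sum_eq_zero fun i hi => ?_
      simp [hconst i (Finset.mem_range.1 hi).le, hgrad0]
    simp [hsum, ← hΔ]
  have hmom := fun i (hi : i < T) => conditional_moments (ℱ.le i)
    (hgradcont.comp_stronglyMeasurable (hθadapt i hi.le))
    (fun ω => hgradG (θ i ω)) (hgint i hi) (hg2int i hi) (hmean i hi) (hvar i hi)
  have hθint : ∀ i ≤ T, Integrable (θ i) μ := by
    intro i
    induction i with
    | zero => exact fun _ => by simp [funext hθ0]
    | succ i ih =>
      intro hi
      rw [funext (hupd i hi)]
      exact (ih (by omega)).sub ((hgint i hi).smul α)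
  have hfint : ∀ i ≤ T, Integrable (fun ω => f (θ i ω)) μ := by
    intro i hi
    refine Integrable.mono' (g := fun ω => |f 0| + G * ‖θ i ω‖)
      ((integrable_const _).add ((hθint i hi).norm.const_mul G))
      (hdiff.continuous.comp_aestronglyMeasurable (hθint i hi).1)
      (Filter.Eventually.of_forall fun ω => ?_)
    have h1 := hlip (θ i ω) 0
    rw [sub_zero] at h1
    have h2 := abs_add_le (f 0) (f (θ i ω) - f 0)
    rw [add_sub_cancel] at h2
    exact h2.trans (by gcongr)
  have hstep : ∀ i < T, α * ∫ ω, ‖gradient f (θ i ω)‖ ^ 2 ∂μ ≤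
      ∫ ω, f (θ i ω) ∂μ - ∫ ω, f (θ (i + 1) ω) ∂μ + L * α ^ 2 * (V + G ^ 2) := by
    intro i hi
    obtain ⟨hXg, hcross, hg2, hg2le⟩ := hmom i hi
    have hint := ((hfint i hi.le).sub (hXg.const_mul α)).add (hg2.const_mul (L * α ^ 2))
    have h := integral_mono (hfint (i + 1) hi) hint fun ω => by
      have h := le_add_inner_gradient_add_sq hL.le hdiff hsmooth (θ i ω) (θ (i + 1) ω)
      rw [hupd i hi ω, sub_sub_cancel_left, norm_neg, norm_smul, inner_neg_right,
        inner_smul_right, mul_pow, Real.norm_eq_abs, sq_abs] at h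
      rw [← hupd i hi ω] at h
      simp only [Pi.add_apply, Pi.sub_apply]
      linarith
    rw [integral_add' ((hfint i hi.le).sub (hXg.const_mul α)) (hg2.const_mul (L * α ^ 2)),
      integral_sub' (hfint i hi.le) (hXg.const_mul α), integral_const_mul, integral_const_mul,
      hcross] at h
    have h3 := mul_le_mul_of_nonneg_left hg2le (by positivity : 0 ≤ L * α ^ 2)
    linarith
  set S := ∑ i ∈ Finset.range T, ∫ ω, ‖gradient f (θ i ω)‖ ^ 2 ∂μ with hS
  have hsum : α * S ≤ Δ₀ + L * T * (V + G ^ 2) * α ^ 2 := by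
    have h := Finset.sum_le_sum fun i hi => hstep i (Finset.mem_range.1 hi)
    rw [← Finset.mul_sum, Finset.sum_add_distrib,
      Finset.sum_range_sub' (fun i => ∫ ω, f (θ i ω) ∂μ)] at h
    have h0 : ∫ ω, f (θ 0 ω) ∂μ = f θ₀ := by simp [hθ0]
    have hTlow : f θ₀ - Δ₀ ≤ ∫ ω, f (θ T ω) ∂μ := by
      calc f θ₀ - Δ₀ = ∫ _, f θ₀ - Δ₀ ∂μ := by simp
        _ ≤ _ := integral_mono (integrable_const _) (hfint T le_rfl) fun ω => hinf _
    rw [h0] at h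
    simp only [Finset.sum_const, Finset.card_range, nsmul_eq_mul] at h
    linarith
  have hαpos : 0 < α := hα ▸ Real.sqrt_pos.2 (by positivity)
  have hα2 : L * T * (V + G ^ 2) * α ^ 2 = 2 * Δ₀ := by
    rw [hα, Real.sq_sqrt (by positivity)]
    field_simp
  -- By `hα2` both sides equal `2 Δ₀ / (α T)`.
  have hrhs : Real.sqrt (2 * Δ₀ * L * (V + G ^ 2)) / Real.sqrt T = L * (V + G ^ 2) * α := by
    rw [← Real.sqrt_div (by positivity)]
    rw [Real.sqrt_eq_iff_mul_self_eq (by positivity) (by positivity)]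
    field_simp
    linear_combination -hα2
  rw [mul_div_assoc, hrhs, one_div, inv_mul_le_iff₀ hT0]
  refine le_of_mul_le_mul_left ?_ hαpos
  linarith [show α * (T * (2 * (L * (V + G ^ 2) * α))) = 2 * (L * T * (V + G ^ 2) * α ^ 2) by ring]
end

section
/- Let c : R^b -> R be Lipschitz and let delta > 0. Then the delta-smoothed function hat{c}(theta) = E_{v ~ Unif(B_b)}[c(theta + delta*v)] is differentiable and its gradient admits the one-point sphere-sampling representation: for every theta in R^b, grad hat{c}(theta) = (b/delta) * E_{u ~ Unif(S^{b-1})}[ c(theta + delta*u) * u ]. -/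
/-!
The key identity is the divergence theorem on the unit ball for a Lipschitz function `f`:
`∫_B ∂_w f = ∫_S f(u) ⟪u, w⟫ dσ(u)` for every direction `w`.

Mathlib's integration by parts for Lipschitz functions (from the proof of Rademacher's theorem)
applies to `f` and the tent function `x ↦ (R - ‖x‖)₊`, whose derivative in direction `-w` is
`⟪x, w⟫ / ‖x‖` on the ball of radius `R`. With `n` the dimension, polar coordinates then give
`∫ ∂_w f(x) (R - ‖x‖)₊ dx = ∫_0^R r^(n-1) ∫_S f(r u) ⟪u, w⟫ dσ(u) dr`
(`integral_lineDeriv_mul_tent`). Differentiating both sides in `R` at `R = 1` yields the divergence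
theorem (`setIntegral_lineDeriv_ball`): on the left `d/dR (R - ‖x‖)₊` is the indicator of the ball,
and on the right the fundamental theorem of calculus applies, the integrand being continuous in `r`.

By Rademacher's theorem and dominated differentiation the smoothed function is differentiable, with
derivative the average of `fderiv ℝ c (θ + δ • v)` over the ball (`hasFDerivAt_smoothed`). The
divergence theorem applied to `v ↦ c (θ + δ • v)`, together with `σ(S) = b · vol(B)`, gives the
representation of the gradient.
-/

open MeasureTheory Metric

/-- The uniform probability measure on the closed Euclidean unit ball in `ℝ^b`. -/
noncomputable def uniformBall (b : ℕ) : Measure (EuclideanSpace ℝ (Fin b)) :=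
  (volume (closedBall (0 : EuclideanSpace ℝ (Fin b)) 1))⁻¹ •
    volume.restrict (closedBall (0 : EuclideanSpace ℝ (Fin b)) 1)

lemma lipschitzWith_tent {E : Type*} [NormedAddCommGroup E] (R : ℝ) :
    LipschitzWith 1 (fun x : E => max 0 (R - ‖x‖)) := by
  have h : LipschitzWith 1 (fun x : E => R - ‖x‖) := by
    simpa using (LipschitzWith.const R).sub (lipschitzWith_one_norm (E := E))
  exact h.const_max 0

lemma hasCompactSupport_tent {E : Type*} [NormedAddCommGroup E] [ProperSpace E] (R : ℝ) :
    HasCompactSupport (fun x : E => max 0 (R - ‖x‖)) :=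
  HasCompactSupport.intro (isCompact_closedBall (0 : E) R) fun x hx => by
    simp only [mem_closedBall, dist_zero_right, not_le] at hx
    exact max_eq_left (by linarith)

section Divergence

variable {E : Type*} [NormedAddCommGroup E] [InnerProductSpace ℝ E] [FiniteDimensional ℝ E]
  [Nontrivial E] [MeasurableSpace E] [BorelSpace E] (μ : Measure E) [μ.IsAddHaarMeasure]

/-- Integration in polar coordinates. The factor `r ^ (n - 1)` uses natural subtraction, which is
harmless because `E` is nontrivial. -/
lemma integral_polar {k : E → ℝ} (hk : Integrable k μ) :
    ∫ x, k x ∂μ = ∫ r in Set.Ioi (0 : ℝ), r ^ (Module.finrank ℝ E - 1) *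
      ∫ u, k (r • (u : E)) ∂μ.toSphere := by
  have hmp := μ.measurePreserving_homeomorphUnitSphereProd
  have hemb := (homeomorphUnitSphereProd E).measurableEmbedding
  let K : sphere (0 : E) 1 × Set.Ioi (0 : ℝ) → ℝ := fun p => k (p.2.1 • (p.1 : E))
  have hcomp : ∀ x : ({0}ᶜ : Set E), K (homeomorphUnitSphereProd E x) = k x := fun x =>
    congrArg k (congrArg Subtype.val ((homeomorphUnitSphereProd E).symm_apply_apply x))
  have hK : Integrable K (μ.toSphere.prod (.volumeIoiPow (Module.finrank ℝ E - 1))) := by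
    rw [← hmp.integrable_comp_emb hemb]
    have : K ∘ homeomorphUnitSphereProd E = k ∘ Subtype.val := funext hcomp
    rw [this, ← integrableOn_iff_comap_subtypeVal (measurableSet_singleton _).compl]
    exact hk.integrableOn
  calc
    ∫ x, k x ∂μ = ∫ x : ({(0)}ᶜ : Set E), k x ∂(μ.comap (↑)) := by
      rw [integral_subtype_comap (measurableSet_singleton _).compl fun x ↦ k x,
        restrict_compl_singleton]
    _ = ∫ p, K p ∂μ.toSphere.prod (.volumeIoiPow (Module.finrank ℝ E - 1)) := by
      rw [← hmp.integral_comp hemb]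
      exact integral_congr_ae (.of_forall fun x => (hcomp x).symm)
    _ = ∫ r : Set.Ioi (0 : ℝ), (∫ u, k (r.1 • (u : E)) ∂μ.toSphere)
          ∂.volumeIoiPow (Module.finrank ℝ E - 1) := integral_prod_symm K hK
    _ = _ := by
      simp only [Measure.volumeIoiPow, ENNReal.ofReal]
      rw [integral_withDensity_eq_integral_smul,
        integral_subtype_comap measurableSet_Ioi fun a : ℝ ↦
          Real.toNNReal (a ^ (Module.finrank ℝ E - 1)) • ∫ u, k (a • (u : E)) ∂μ.toSphere,
        setIntegral_congr_fun measurableSet_Ioi fun x hx ↦ ?_]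
      · simp only [NNReal.smul_def, Real.coe_toNNReal _ (pow_nonneg (Set.mem_Ioi.1 hx).le _),
          smul_eq_mul]
      · exact (measurable_subtype_coe.pow_const _).real_toNNReal

/-- The tent function `x ↦ (R - ‖x‖)₊` has directional derivative `⟪x, w⟫ / ‖x‖` in direction `-w`
inside the ball of radius `R`, away from the origin, and `0` outside the closed ball. -/
lemma ae_lineDeriv_tent (R : ℝ) (w : E) :
    ∀ᵐ x ∂μ, lineDeriv ℝ (fun x : E => max 0 (R - ‖x‖)) x (-w) =
      (ball (0 : E) R).indicator (fun x => ‖x‖⁻¹ * inner ℝ x w) x := by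
  have h0 : ∀ᵐ x ∂μ, x ≠ (0 : E) := by simp [ae_iff]
  have hS : ∀ᵐ x ∂μ, ‖x‖ ≠ R ∨ x = 0 := by
    rcases eq_or_ne R 0 with rfl | hR
    · exact .of_forall fun x => by simpa using (em (x = 0)).symm
    · have := Measure.addHaar_sphere_of_ne_zero μ (0 : E) hR
      filter_upwards [measure_eq_zero_iff_ae_notMem.1 this] with x hx
      exact Or.inl (by simpa using hx)
  filter_upwards [h0, hS] with x hx hxR
  have hxR : ‖x‖ ≠ R := hxR.resolve_right hx
  rcases lt_or_gt_of_ne hxR with h | h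
  · have hev : (fun x : E => max 0 (R - ‖x‖)) =ᶠ[nhds x] fun x => R - ‖x‖ := by
      filter_upwards [(isOpen_lt continuous_norm continuous_const).mem_nhds h] with y hy
      exact max_eq_right (sub_nonneg.2 (le_of_lt hy))
    rw [Set.indicator_of_mem (by simpa using h), hev.lineDeriv_eq]
    have hd : DifferentiableAt ℝ (fun y : E => ‖y‖) x :=
      (contDiffAt_norm ℝ hx (n := 1)).differentiableAt (by simp)
    have hf : HasFDerivAt (fun y : E => ‖y‖ ^ 2) (2 • innerSL ℝ x) x := (hasStrictFDerivAt_norm_sq x).hasFDerivAt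
    -- Comparing the two expressions for the derivative of `‖y‖ ^ 2` identifies that of `‖y‖`.
    have hf2 := hd.hasFDerivAt.pow 2
    have := congrArg (fun L => L w) (hf.unique hf2)
    simp at this
    have hne : ‖x‖ ≠ 0 := norm_ne_zero_iff.2 hx
    rw [(hd.hasFDerivAt.const_sub R).hasLineDerivAt (-w) |>.lineDeriv]
    simp
    field_simp
    linarith
  · have hev : (fun x : E => max 0 (R - ‖x‖)) =ᶠ[nhds x] fun x => 0 := by
      filter_upwards [(isOpen_lt continuous_const continuous_norm).mem_nhds h] with y hy
      exact max_eq_left (sub_nonpos.2 (le_of_lt hy))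
    rw [Set.indicator_of_notMem (by simpa using h.le), hev.lineDeriv_eq]
    simp [lineDeriv]

/-- Integration by parts of `f` against the tent function, written in polar coordinates. -/
lemma integral_lineDeriv_mul_tent {f : E → ℝ} {C : NNReal} (hf : LipschitzWith C f) (w : E)
    {R : ℝ} (hR : 0 ≤ R) :
    ∫ x, lineDeriv ℝ f x w * max 0 (R - ‖x‖) ∂μ =
      ∫ r in (0 : ℝ)..R, r ^ (Module.finrank ℝ E - 1) *
        ∫ u : sphere (0 : E) 1, f (r • (u : E)) * inner ℝ (u : E) w ∂μ.toSphere := by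
  let k : E → ℝ := (ball (0 : E) R).indicator (fun x => ‖x‖⁻¹ * inner ℝ x w * f x)
  have hk : Integrable k μ := by
    rw [integrable_indicator_iff measurableSet_ball]
    have hfi : IntegrableOn f (ball 0 R) μ :=
      (hf.continuous.continuousOn.integrableOn_compact (isCompact_closedBall (0 : E) R)).mono_set
        ball_subset_closedBall
    refine hfi.bdd_mul (c := ‖w‖) (by fun_prop) (.of_forall fun x => ?_)
    rw [norm_mul, norm_inv, norm_norm]
    rcases eq_or_ne x 0 with rfl | hx
    · simp
    · rw [inv_mul_le_iff₀ (norm_pos_iff.2 hx)]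
      exact norm_inner_le_norm x w
  rw [hf.integral_lineDeriv_mul_eq (lipschitzWith_tent R) (hasCompactSupport_tent R) w]
  have h1 : ∫ x, lineDeriv ℝ (fun x : E => max 0 (R - ‖x‖)) x (-w) * f x ∂μ = ∫ x, k x ∂μ := by
    refine integral_congr_ae ?_
    filter_upwards [ae_lineDeriv_tent μ R w] with x hx
    rw [hx]
    by_cases h : x ∈ ball (0 : E) R <;> simp [k, h]
  rw [h1, integral_polar μ hk, intervalIntegral.integral_of_le hR,
    ← setIntegral_congr_set (Ioo_ae_eq_Ioc (μ := volume) (a := (0 : ℝ)) (b := R)),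
    ← Set.Ioi_inter_Iio, ← setIntegral_indicator measurableSet_Iio]
  refine setIntegral_congr_fun measurableSet_Ioi fun r (hr : 0 < r) => ?_
  have hn : ∀ u : sphere (0 : E) 1, ‖r • (u : E)‖ = r := fun u => by
    simp [norm_smul, abs_of_pos hr]
  by_cases h : r < R
  · simp only [Set.indicator_of_mem (Set.mem_Iio.2 h)]
    congr 1
    refine integral_congr_ae (.of_forall fun u => ?_)
    have : r • (u : E) ∈ ball (0 : E) R := by simp only [mem_ball_zero_iff, hn, h]
    simp only [k, Set.indicator_of_mem this, hn, real_inner_smul_left]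
    field_simp
  · simp only [Set.indicator_of_notMem (show r ∉ Set.Iio R from h)]
    have : ∀ u : sphere (0 : E) 1, r • (u : E) ∉ ball (0 : E) R := fun u => by
      simp only [mem_ball_zero_iff, hn, h, not_false_iff]
    simp [k, this]

/-- The divergence theorem on the unit ball for a Lipschitz function and a constant direction `w`. -/
lemma setIntegral_lineDeriv_ball {f : E → ℝ} {C : NNReal} (hf : LipschitzWith C f) (w : E) :
    ∫ x in ball (0 : E) 1, lineDeriv ℝ f x w ∂μ =
      ∫ u : sphere (0 : E) 1, f u * inner ℝ (u : E) w ∂μ.toSphere := by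
  let F : E → ℝ := fun x => lineDeriv ℝ f x w
  have hFm : AEStronglyMeasurable F μ := aestronglyMeasurable_lineDeriv hf.continuous μ
  have hFb : ∀ x, ‖F x‖ ≤ C * ‖w‖ := fun x => norm_lineDeriv_le_of_lipschitz ℝ hf
  -- For `R` close to `1` the tent functions all vanish outside the ball of radius `2`.
  let ν := μ.restrict (ball (0 : E) 2)
  have : IsFiniteMeasure ν := ⟨by simpa [ν] using measure_ball_lt_top⟩
  have hFν : Integrable F ν := .of_bound hFm.restrict (C * ‖w‖) (.of_forall hFb)
  have hS : ∀ᵐ x ∂ν, ‖x‖ ≠ 1 := ae_restrict_of_ae <| by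
    filter_upwards [measure_eq_zero_iff_ae_notMem.1
      (Measure.addHaar_sphere_of_ne_zero μ (0 : E) one_ne_zero)] with x hx
    simpa using hx
  have hL := (hasDerivAt_integral_of_dominated_loc_of_lip (μ := ν) (x₀ := (1 : ℝ)) (s := Set.univ)
    (F := fun R x => F x * max 0 (R - ‖x‖)) (F' := (ball (0 : E) 1).indicator F)
    (bound := fun x => ‖F x‖) Filter.univ_mem (.of_forall fun R => ?_) ?_ ?_ ?_ hFν.norm ?_).2
  rotate_left
  · exact hFm.restrict.mul (by fun_prop)
  · refine hFν.mul_bdd (c := 1) (by fun_prop) (.of_forall fun x => ?_)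
    rw [Real.norm_of_nonneg (le_max_left _ _)]
    exact max_le zero_le_one (by linarith [norm_nonneg x])
  · exact hFm.restrict.indicator measurableSet_ball
  · refine .of_forall fun x => LipschitzWith.lipschitzOnWith ?_
    refine LipschitzWith.of_dist_le_mul fun R S => ?_
    have : |max 0 (R - ‖x‖) - max 0 (S - ‖x‖)| ≤ |R - S| := by
      simpa using abs_max_sub_max_le_abs (R - ‖x‖) (S - ‖x‖) 0 |>.trans_eq' (by simp [max_comm])
    simp only [Real.dist_eq, ← mul_sub, abs_mul, Real.coe_nnabs, Real.norm_eq_abs, abs_abs]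
    gcongr
  · filter_upwards [hS] with x hx
    rcases lt_or_gt_of_ne hx with h | h
    · rw [Set.indicator_of_mem (by simpa using h)]
      have : HasDerivAt (fun R : ℝ => F x * (R - ‖x‖)) (F x) 1 := by
        simpa using ((hasDerivAt_id (1 : ℝ)).sub_const ‖x‖).const_mul (F x)
      refine this.congr_of_eventuallyEq ?_
      filter_upwards [lt_mem_nhds h] with R hR
      rw [max_eq_right (by linarith)]
    · rw [Set.indicator_of_notMem (by simpa using h.le)]
      refine (hasDerivAt_const (1 : ℝ) (0 : ℝ)).congr_of_eventuallyEq ?_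
      filter_upwards [gt_mem_nhds h] with R hR
      rw [max_eq_left (by linarith), mul_zero]
  have hcont : Continuous fun r : ℝ => r ^ (Module.finrank ℝ E - 1) *
      ∫ u : sphere (0 : E) 1, f (r • (u : E)) * inner ℝ (u : E) w ∂μ.toSphere := by
    have hfc := hf.continuous
    refine (continuous_pow _).mul ?_
    have := continuous_parametric_integral_of_continuous (μ := μ.toSphere) (s := Set.univ)
      (f := fun (r : ℝ) (u : sphere (0 : E) 1) => f (r • (u : E)) * inner ℝ (u : E) w)
      (by unfold Function.uncurry; fun_prop) isCompact_univ
    simpa using this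
  have hD := hcont.integral_hasStrictDerivAt 0 1 |>.hasDerivAt
  have hev : (fun R : ℝ => ∫ x, F x * max 0 (R - ‖x‖) ∂ν) =ᶠ[nhds 1]
      fun R => ∫ r in (0 : ℝ)..R, r ^ (Module.finrank ℝ E - 1) *
        ∫ u : sphere (0 : E) 1, f (r • (u : E)) * inner ℝ (u : E) w ∂μ.toSphere := by
    filter_upwards [Ioo_mem_nhds (zero_lt_one' ℝ) one_lt_two] with R hR
    rw [← integral_lineDeriv_mul_tent μ hf w hR.1.le]
    refine setIntegral_eq_integral_of_forall_compl_eq_zero fun x hx => ?_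
    rw [max_eq_left, mul_zero]
    have : 2 ≤ ‖x‖ := by simpa using hx
    linarith [hR.2]
  -- Both sides are now differentiated in `R` at `R = 1`.
  have := hL.unique (hD.congr_of_eventuallyEq hev)
  rw [integral_indicator measurableSet_ball, Measure.restrict_restrict measurableSet_ball,
    Set.inter_eq_left.2 (ball_subset_ball one_le_two)] at this
  simpa using this

end Divergence

lemma quasiMeasurePreserving_add_smul {b : ℕ} {δ : ℝ} (hδ : δ ≠ 0)
    (θ : EuclideanSpace ℝ (Fin b)) :
    Measure.QuasiMeasurePreserving (fun v : EuclideanSpace ℝ (Fin b) => θ + δ • v)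
      volume volume := by
  refine (quasiMeasurePreserving_add_left volume θ).comp ⟨measurable_const_smul δ, ?_⟩
  rw [Measure.map_addHaar_smul volume hδ]
  exact Measure.smul_absolutelyContinuous

/-- Differentiation under the integral sign: `c` is differentiable at `θ + δ • v` for almost every `v`
by Rademacher's theorem, and the difference quotients are bounded by the Lipschitz constant. -/
lemma hasFDerivAt_smoothed {b : ℕ} (hb : 1 ≤ b) {δ : ℝ} (hδ : 0 < δ)
    {c : EuclideanSpace ℝ (Fin b) → ℝ} {G : NNReal} (hc : LipschitzWith G c)
    (θ : EuclideanSpace ℝ (Fin b)) :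
    Integrable (fun v => fderiv ℝ c (θ + δ • v)) (uniformBall b) ∧
    HasFDerivAt (fun θ' => ∫ v, c (θ' + δ • v) ∂(uniformBall b))
      (∫ v, fderiv ℝ c (θ + δ • v) ∂(uniformBall b)) θ := by
  have : NeZero b := ⟨by omega⟩
  have hcc := hc.continuous
  have hV0 : volume (closedBall (0 : EuclideanSpace ℝ (Fin b)) 1) ≠ 0 :=
    (measure_closedBall_pos _ _ one_pos).ne'
  have hVt : volume (closedBall (0 : EuclideanSpace ℝ (Fin b)) 1) ≠ ⊤ :=
    measure_closedBall_lt_top.ne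
  have : IsFiniteMeasure (uniformBall b) := ⟨by
    simp [uniformBall, ENNReal.inv_mul_cancel hV0 hVt]⟩
  have hac : uniformBall b ≪ volume :=
    (Measure.smul_absolutelyContinuous).trans Measure.restrict_le_self.absolutelyContinuous
  have hq := quasiMeasurePreserving_add_smul hδ.ne' θ
  have hint : Integrable (fun v => c (θ + δ • v)) (uniformBall b) := by
    refine Integrable.smul_measure ?_ (ENNReal.inv_ne_top.2 hV0)
    exact ContinuousOn.integrableOn_compact (isCompact_closedBall _ _) (by fun_prop)
  refine hasFDerivAt_integral_of_dominated_loc_of_lip (s := Set.univ) (bound := fun _ => (G : ℝ))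
    Filter.univ_mem (.of_forall fun θ' => by fun_prop) hint ?_ ?_ (integrable_const _) ?_
  · exact ((measurable_fderiv ℝ c).comp (by fun_prop)).aestronglyMeasurable
  · refine .of_forall fun v => LipschitzWith.lipschitzOnWith ?_
    refine LipschitzWith.of_dist_le_mul fun x y => ?_
    simpa using hc.dist_le_mul (x + δ • v) (y + δ • v)
  · filter_upwards [hac.ae_le (hq.ae hc.ae_differentiableAt)] with v hv
    exact (hasFDerivAt_comp_add_right (δ • v)).2 hv.hasFDerivAt

/-- the smoothed function of a Lipschitz function is differentiable and its
gradient admits the one-point sphere-sampling representation. -/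
theorem one_point_gradient_representation (b : ℕ) (hb : 1 ≤ b) (δ : ℝ) (hδ : 0 < δ)
    (c : EuclideanSpace ℝ (Fin b) → ℝ) (G : NNReal) (hc : LipschitzWith G c) :
    Differentiable ℝ (fun θ : EuclideanSpace ℝ (Fin b) =>
        ∫ v, c (θ + δ • v) ∂(uniformBall b)) ∧
      ∀ θ : EuclideanSpace ℝ (Fin b),
        gradient (fun θ' => ∫ v, c (θ' + δ • v) ∂(uniformBall b)) θ
          = ((b : ℝ) / δ) • ∫ u, c (θ + δ • u) • u ∂(uniformSphere b) := by
  have : NeZero b := ⟨by omega⟩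
  refine ⟨fun θ => (hasFDerivAt_smoothed hb hδ hc θ).2.differentiableAt, fun θ => ?_⟩
  obtain ⟨hint, hderiv⟩ := hasFDerivAt_smoothed hb hδ hc θ
  have hcc := hc.continuous
  set σ := (volume : Measure (EuclideanSpace ℝ (Fin b))).toSphere with hσ
  have hf : LipschitzWith (G * δ.toNNReal) (fun v => c (θ + δ • v)) := by
    refine hc.comp (LipschitzWith.of_dist_le_mul fun x y => ?_)
    simp [dist_smul₀, abs_of_pos hδ, hδ.le]
  have hsph : ∫ u, c (θ + δ • u) • u ∂(uniformSphere b) =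
      (σ.real Set.univ)⁻¹ • ∫ u : sphere (0 : EuclideanSpace ℝ (Fin b)) 1,
        c (θ + δ • (u : EuclideanSpace ℝ (Fin b))) • (u : EuclideanSpace ℝ (Fin b)) ∂σ := by
    rw [uniformSphere, (MeasurableEmbedding.subtype_coe isClosed_sphere.measurableSet).integral_map,
      integral_smul_measure, ENNReal.toReal_inv]
    rfl
  have hball : ball (0 : EuclideanSpace ℝ (Fin b)) 1 =ᵐ[volume] closedBall 0 1 :=
    ae_eq_of_subset_of_measure_ge ball_subset_closedBall
      (Measure.addHaar_closedBall_eq_addHaar_ball _ _ _).le measurableSet_ball.nullMeasurableSet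
      measure_closedBall_lt_top.ne
  set V := (volume : Measure (EuclideanSpace ℝ (Fin b))).real (ball 0 1) with hV
  have hVpos : 0 < V :=
    ENNReal.toReal_pos (measure_ball_pos _ _ one_pos).ne' measure_ball_lt_top.ne
  refine ext_inner_right ℝ fun w => ?_
  have hq := quasiMeasurePreserving_add_smul hδ.ne' θ
  have hchain : ∀ᵐ v : EuclideanSpace ℝ (Fin b), fderiv ℝ c (θ + δ • v) w =
      δ⁻¹ * lineDeriv ℝ (fun v => c (θ + δ • v)) v w := by
    filter_upwards [hq.ae hc.ae_differentiableAt] with v hv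
    have h1 : HasFDerivAt (fun v : EuclideanSpace ℝ (Fin b) => θ + δ • v)
        (δ • ContinuousLinearMap.id ℝ _) v := ((hasFDerivAt_id v).const_smul δ).const_add θ
    have h2 := (hv.hasFDerivAt.comp v h1).hasLineDerivAt w
    have h3 : lineDeriv ℝ (fun v => c (θ + δ • v)) v w = _ := h2.lineDeriv
    rw [h3]
    simp [hδ.ne']
  have hvol : volume (closedBall (0 : EuclideanSpace ℝ (Fin b)) 1) =
      volume (ball (0 : EuclideanSpace ℝ (Fin b)) 1) :=
    Measure.addHaar_closedBall_eq_addHaar_ball _ _ _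
  have hL : inner ℝ (gradient (fun θ' => ∫ v, c (θ' + δ • v) ∂(uniformBall b)) θ) w =
      V⁻¹ * (δ⁻¹ * ∫ u : sphere (0 : EuclideanSpace ℝ (Fin b)) 1,
        c (θ + δ • (u : EuclideanSpace ℝ (Fin b))) * inner ℝ (u : EuclideanSpace ℝ (Fin b)) w
          ∂σ) := by
    rw [gradient, InnerProductSpace.toDual_symm_apply, hderiv.fderiv,
      ContinuousLinearMap.integral_apply hint, uniformBall, integral_smul_measure, hvol,
      ENNReal.toReal_inv, ← setIntegral_congr_set hball,
      integral_congr_ae (ae_restrict_of_ae hchain), integral_const_mul,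
      setIntegral_lineDeriv_ball volume hf w]
    rfl
  have hR : inner ℝ (∫ u : sphere (0 : EuclideanSpace ℝ (Fin b)) 1,
        c (θ + δ • (u : EuclideanSpace ℝ (Fin b))) • (u : EuclideanSpace ℝ (Fin b)) ∂σ) w =
      ∫ u : sphere (0 : EuclideanSpace ℝ (Fin b)) 1,
        c (θ + δ • (u : EuclideanSpace ℝ (Fin b))) * inner ℝ (u : EuclideanSpace ℝ (Fin b)) w
          ∂σ := by
    rw [real_inner_comm, ← integral_inner]
    · simp only [inner_smul_right, real_inner_comm]
    · rw [← integrableOn_univ]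
      exact ContinuousOn.integrableOn_compact isCompact_univ (by fun_prop)
  have hb0 : (b : ℝ) ≠ 0 := by exact_mod_cast (by omega : b ≠ 0)
  rw [hL, hsph, real_inner_smul_left, real_inner_smul_left, hR, hσ,
    Measure.toSphere_real_apply_univ, finrank_euclideanSpace_fin, ← hV]
  field_simp
end

section
/- Fix s in R^b, a in R, and delta > 0, and define the action-smoothed loss tilde{c}(theta) = E_{eps ~ Unif([-1,1])}[ (theta^T s + delta*eps - a)^2 ] for theta in R^b. Then tilde{c} is differentiable and for every theta, grad tilde{c}(theta) = (1/delta) * E_{e ~ Unif({-1,1})}[ e * (theta^T s + delta*e - a)^2 ] * s, where e is uniformly distributed on the two-point set {-1, +1} and eps is uniformly distributed on the interval [-1, 1]. -/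
/-!
The cross term of the expanded square is odd in `ε`, so the smoothed loss is
`(⟪θ, s⟫ - a) ^ 2 + δ ^ 2 / 3`, with gradient `2 (⟪θ, s⟫ - a) • s`. The two-point average is the
symmetric difference quotient of a quadratic, which equals its derivative `2 (⟪θ, s⟫ - a)` exactly.
-/

open MeasureTheory Metric
open scoped RealInnerProductSpace

/-- The uniform probability measure on the real interval `[-1, 1]`. -/
noncomputable def uniformIcc : Measure ℝ :=
  (volume (Set.Icc (-1 : ℝ) 1))⁻¹ • volume.restrict (Set.Icc (-1 : ℝ) 1)

theorem integral_uniformIcc_sq (x a δ : ℝ) :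
    ∫ ε, (x + δ * ε - a) ^ 2 ∂uniformIcc = (x - a) ^ 2 + δ ^ 2 / 3 := by
  have h : ∫ ε in (-1 : ℝ)..1, (x + δ * ε - a) ^ 2 = 2 * (x - a) ^ 2 + 2 * δ ^ 2 / 3 := by
    have hd : ∀ ε ∈ Set.uIcc (-1 : ℝ) 1,
        HasDerivAt (fun ε : ℝ => (x - a) ^ 2 * ε + (x - a) * δ * ε ^ 2 + δ ^ 2 / 3 * ε ^ 3)
          ((x + δ * ε - a) ^ 2) ε := by
      intro ε _
      refine ((((hasDerivAt_id ε).const_mul ((x - a) ^ 2)).add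
        ((hasDerivAt_pow 2 ε).const_mul ((x - a) * δ))).add
        ((hasDerivAt_pow 3 ε).const_mul (δ ^ 2 / 3))).congr_deriv ?_
      push_cast
      ring
    rw [intervalIntegral.integral_eq_sub_of_hasDerivAt hd
      (Continuous.intervalIntegrable (by fun_prop) _ _)]
    ring
  rw [uniformIcc, integral_smul_measure, integral_Icc_eq_integral_Ioc,
    ← intervalIntegral.integral_of_le (by norm_num), h, Real.volume_Icc, ENNReal.toReal_inv,
    ENNReal.toReal_ofReal (by norm_num), smul_eq_mul]
  ring

theorem hasGradientAt_inner_sub_sq {E : Type*} [NormedAddCommGroup E] [InnerProductSpace ℝ E]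
    [CompleteSpace E] (s θ : E) (a c : ℝ) :
    HasGradientAt (fun θ' : E => (⟪θ', s⟫ - a) ^ 2 + c) ((2 * (⟪θ, s⟫ - a)) • s) θ := by
  rw [hasGradientAt_iff_hasFDerivAt]
  have h : HasFDerivAt (fun θ' : E => ⟪θ', s⟫) (innerSL ℝ s) θ := by
    convert (innerSL ℝ s).hasFDerivAt (x := θ) using 1
    ext θ'
    exact real_inner_comm s θ'
  refine (((h.sub_const a).pow 2).add_const c).congr_fderiv ?_
  ext v
  simp

/-- the action-smoothed squared loss is differentiable, and its gradient is
`(1/δ) * E_{e ~ Unif{-1,1}}[ e * (θᵀs + δ e - a)² ] • s`, where the expectation over the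
uniform distribution on `{-1, +1}` is written out as the average of the two values. -/
theorem action_smoothed_gradient (b : ℕ) (s : EuclideanSpace ℝ (Fin b)) (a : ℝ)
    (δ : ℝ) (hδ : 0 < δ) :
    Differentiable ℝ (fun θ : EuclideanSpace ℝ (Fin b) =>
        ∫ ε, (⟪θ, s⟫ + δ * ε - a) ^ 2 ∂uniformIcc) ∧
      ∀ θ : EuclideanSpace ℝ (Fin b),
        gradient (fun θ' => ∫ ε, (⟪θ', s⟫ + δ * ε - a) ^ 2 ∂uniformIcc) θ
          = ((1 / δ) * (((1 : ℝ) * (⟪θ, s⟫ + δ * 1 - a) ^ 2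
              + (-1 : ℝ) * (⟪θ, s⟫ + δ * (-1) - a) ^ 2) / 2)) • s := by
  simp_rw [integral_uniformIcc_sq]
  refine ⟨fun θ => (hasGradientAt_inner_sub_sq s θ a _).differentiableAt, fun θ => ?_⟩
  rw [(hasGradientAt_inner_sub_sq s θ a _).gradient]
  congr 1
  field_simp
  ring
end

section
/- Let J : R^d -> R be differentiable, G-Lipschitz, and L-smooth, fix theta_0 in R^d, and let Delta_0 = J(theta_0) - inf_theta J(theta) (assumed finite). Run the biased stochastic gradient iteration theta_{i+1} = theta_i - alpha*g_i for T steps with fixed alpha > 0, where each stochastic gradient g_i satisfies, conditional on the history up to iteration i-1: E_i[g_i] = grad J(theta_i) + beta_i with ||beta_i|| <= B almost surely, and E_i[||g_i - E_i[g_i]||^2] <= V. Then sum_{i=1}^T E||grad J(theta_i)||^2 <= Delta_0/alpha + (L*T*alpha/2)*((G + B)^2 + V) + (L*alpha + 1)*G*B*T. -/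
/-!
The proof is the standard descent argument. Smoothness gives
`J (θ - α g) ≤ J θ - α ⟪∇J θ, g⟫ + (L α² / 2) ‖g‖²` (`descent_lemma`). Write `c = E_i[g]`. In
expectation a bounded history-measurable vector does not distinguish `g` from `c`
(`integral_inner_condExp`). Hence `E⟪∇J θ, g⟫ = E⟪∇J θ, c⟫ ≥ E‖∇J θ‖² - G B`, and
the bias-variance decomposition gives `E‖g‖² = E‖g - c‖² + E‖c‖² ≤ V + (G + B)²`. This bounds the
expected decrease of `J` over one step (`expected_descent`); the sum over the steps telescopes,
and `E J(θ_T) ≥ inf J`. The argument yields the bound with `G B T` in place of the weaker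
`(L α + 1) G B T`.
-/

open MeasureTheory

section Smooth

variable {E : Type*} [NormedAddCommGroup E] [InnerProductSpace ℝ E] [CompleteSpace E]

/-- The quadratic upper bound for a smooth function. It holds because
`t ↦ J (x + t v) - t ⟪∇J x, v⟫ - L t² ‖v‖² / 2` has nonpositive derivative for `t ≥ 0`. -/
lemma descent_lemma {J : E → ℝ} {L : ℝ} (hdiff : Differentiable ℝ J)
    (hsmooth : ∀ x y, ‖gradient J x - gradient J y‖ ≤ L * ‖x - y‖) (x v : E) :
    J (x + v) ≤ J x + inner ℝ (gradient J x) v + L / 2 * ‖v‖ ^ 2 := by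
  let φ : ℝ → ℝ := fun t => J (x + t • v) - t * inner ℝ (gradient J x) v - L / 2 * ‖v‖ ^ 2 * t ^ 2
  have hφ : ∀ t, HasDerivAt φ (inner ℝ (gradient J (x + t • v)) v - inner ℝ (gradient J x) v
      - L * ‖v‖ ^ 2 * t) t := by
    intro t
    have h1 : HasDerivAt (fun t : ℝ => x + t • v) v t := by
      simpa using ((hasDerivAt_id t).smul_const v).const_add x
    have h2 := (hdiff (x + t • v)).hasGradientAt.hasFDerivAt.comp_hasDerivAt t h1
    have h3 := (h2.sub ((hasDerivAt_id t).mul_const (inner ℝ (gradient J x) v))).sub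
      ((hasDerivAt_pow 2 t).const_mul (L / 2 * ‖v‖ ^ 2))
    refine h3.congr_deriv ?_
    simp
    ring
  have hanti : AntitoneOn φ (Set.Icc 0 1) := by
    refine antitoneOn_of_deriv_nonpos (convex_Icc 0 1)
      (fun t _ => (hφ t).continuousAt.continuousWithinAt)
      (fun t _ => (hφ t).differentiableAt.differentiableWithinAt) fun t ht => ?_
    rw [interior_Icc] at ht
    rw [(hφ t).deriv, ← inner_sub_left]
    have h1 := real_inner_le_norm (gradient J (x + t • v) - gradient J x) v
    have h2 := hsmooth (x + t • v) x
    rw [add_sub_cancel_left, norm_smul, Real.norm_of_nonneg ht.1.le] at h2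
    nlinarith [norm_nonneg v]
  have h := hanti (Set.left_mem_Icc.2 zero_le_one) (Set.right_mem_Icc.2 zero_le_one) zero_le_one
  simp only [φ, one_smul, zero_smul, add_zero] at h
  linarith

lemma norm_gradient_le {J : E → ℝ} {G : ℝ} (hG : 0 ≤ G)
    (hlip : ∀ x y, |J x - J y| ≤ G * ‖x - y‖) (x : E) : ‖gradient J x‖ ≤ G := by
  rw [gradient, LinearIsometryEquiv.norm_map]
  exact norm_fderiv_le_of_lip' ℝ hG (Filter.Eventually.of_forall fun y => hlip y x)

lemma continuous_gradient_of_smooth {J : E → ℝ} {L : ℝ}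
    (hsmooth : ∀ x y, ‖gradient J x - gradient J y‖ ≤ L * ‖x - y‖) : Continuous (gradient J) :=
  (LipschitzWith.of_dist_le' (K := L) fun x y => by
    simpa only [dist_eq_norm] using hsmooth x y).continuous

end Smooth

section Probability

variable {E : Type*} [NormedAddCommGroup E] [InnerProductSpace ℝ E] [CompleteSpace E]
  {Ω : Type*} {m' m : MeasurableSpace Ω} {μ : Measure Ω} [IsProbabilityMeasure μ]

lemma integrable_inner_of_bound {X g : Ω → E} (hX : AEStronglyMeasurable X μ) {C : ℝ}
    (hC : ∀ᵐ ω ∂μ, ‖X ω‖ ≤ C) (hg : Integrable g μ) :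
    Integrable (fun ω => (inner ℝ (X ω) (g ω) : ℝ)) μ :=
  (innerSL ℝ (E := E)).integrable_of_bilin_of_bdd_left C hX hC hg

/-- Inside an expectation, pairing with a bounded `m'`-measurable vector replaces `g` by its
conditional expectation. -/
lemma integral_inner_condExp (hm : m' ≤ m) {X g : Ω → E} (hX : StronglyMeasurable[m'] X) {C : ℝ}
    (hC : ∀ᵐ ω ∂μ, ‖X ω‖ ≤ C) (hg : Integrable g μ) :
    ∫ ω, inner ℝ (X ω) (g ω) ∂μ = ∫ ω, inner ℝ (X ω) ((μ[g|m']) ω) ∂μ := by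
  rw [← integral_condExp hm]
  exact integral_congr_ae
    (condExp_stronglyMeasurable_bilin_of_bound (innerSL ℝ (E := E)) hm hX hg C hC)

/-- Bias-variance bound on the second moment, together with the integrability of `‖g‖²`. -/
lemma second_moment_bound (hm : m' ≤ m) {g : Ω → E} {V C : ℝ} (hg : Integrable g μ)
    (hg2 : Integrable (fun ω => ‖g ω - (μ[g|m']) ω‖ ^ 2) μ)
    (hC : ∀ᵐ ω ∂μ, ‖(μ[g|m']) ω‖ ≤ C)
    (hvar : ∀ᵐ ω ∂μ, (μ[fun ω' => ‖g ω' - (μ[g|m']) ω'‖ ^ 2|m']) ω ≤ V) :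
    Integrable (fun ω => ‖g ω‖ ^ 2) μ ∧ ∫ ω, ‖g ω‖ ^ 2 ∂μ ≤ C ^ 2 + V := by
  have hcm : StronglyMeasurable[m'] (μ[g|m']) := stronglyMeasurable_condExp
  have hcm' : AEStronglyMeasurable (μ[g|m']) μ := (hcm.mono hm).aestronglyMeasurable
  have hi1 := integrable_inner_of_bound hcm' hC hg
  have hi2 : Integrable (fun ω => ‖(μ[g|m']) ω‖ ^ 2) μ := by
    simpa only [real_inner_self_eq_norm_sq] using
      integrable_inner_of_bound hcm' hC (integrable_condExp (f := g) (m := m'))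
  have hexp : (fun ω => ‖g ω‖ ^ 2) = fun ω => ‖g ω - (μ[g|m']) ω‖ ^ 2
      + 2 * inner ℝ ((μ[g|m']) ω) (g ω) - ‖(μ[g|m']) ω‖ ^ 2 := by
    funext ω
    rw [norm_sub_sq_real, real_inner_comm]
    ring
  have hcross := integral_inner_condExp hm hcm hC hg
  simp only [real_inner_self_eq_norm_sq] at hcross
  have hV : ∫ ω, ‖g ω - (μ[g|m']) ω‖ ^ 2 ∂μ ≤ V := by
    rw [← integral_condExp hm]
    simpa using integral_mono_ae integrable_condExp (integrable_const V) hvar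
  have hC2 : ∫ ω, ‖(μ[g|m']) ω‖ ^ 2 ∂μ ≤ C ^ 2 := by
    have h : ∀ᵐ ω ∂μ, ‖(μ[g|m']) ω‖ ^ 2 ≤ C ^ 2 := by
      filter_upwards [hC] with ω hω
      gcongr
    simpa using integral_mono_ae hi2 (integrable_const (C ^ 2)) h
  have hi3 : Integrable (fun ω => ‖g ω - (μ[g|m']) ω‖ ^ 2
      + 2 * inner ℝ ((μ[g|m']) ω) (g ω)) μ := hg2.add (hi1.const_mul 2)
  refine ⟨hexp ▸ hi3.sub hi2, ?_⟩
  rw [hexp, integral_sub hi3 hi2, integral_add hg2 (hi1.const_mul 2), integral_const_mul, hcross]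
  linarith

lemma integrable_comp_of_lipschitz {J : E → ℝ} {G : ℝ} (hJ : Continuous J)
    (hlip : ∀ x y, |J x - J y| ≤ G * ‖x - y‖) {θ : Ω → E} (hθ : Integrable θ μ) :
    Integrable (fun ω => J (θ ω)) μ := by
  refine Integrable.mono' ((hθ.norm.const_mul G).add (integrable_const |J 0|))
    (hJ.comp_aestronglyMeasurable hθ.aestronglyMeasurable) (.of_forall fun ω => ?_)
  have h := hlip (θ ω) 0
  rw [sub_zero] at h
  have h2 := abs_sub_abs_le_abs_sub (J (θ ω)) (J 0)
  simp only [Real.norm_eq_abs, Pi.add_apply]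
  linarith

/-- The expected decrease of the objective over one step of biased stochastic gradient descent. -/
lemma expected_descent (hm : m' ≤ m) {J : E → ℝ} {G L V B α : ℝ} (hG : 0 ≤ G) (hL : 0 < L)
    (hα : 0 < α) (hdiff : Differentiable ℝ J)
    (hlip : ∀ x y, |J x - J y| ≤ G * ‖x - y‖)
    (hsmooth : ∀ x y, ‖gradient J x - gradient J y‖ ≤ L * ‖x - y‖)
    {g θ : Ω → E} (hθm : StronglyMeasurable[m'] θ) (hθ : Integrable θ μ) (hg : Integrable g μ)
    (hg2 : Integrable (fun ω => ‖g ω - (μ[g|m']) ω‖ ^ 2) μ)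
    (hbias : ∀ᵐ ω ∂μ, ‖(μ[g|m']) ω - gradient J (θ ω)‖ ≤ B)
    (hvar : ∀ᵐ ω ∂μ, (μ[fun ω' => ‖g ω' - (μ[g|m']) ω'‖ ^ 2|m']) ω ≤ V) :
    ∫ ω, J (θ ω - α • g ω) ∂μ ≤ ∫ ω, J (θ ω) ∂μ - α * ∫ ω, ‖gradient J (θ ω)‖ ^ 2 ∂μ
      + α * (G * B) + L / 2 * α ^ 2 * ((G + B) ^ 2 + V) := by
  have hXm : StronglyMeasurable[m'] fun ω => gradient J (θ ω) :=
    (continuous_gradient_of_smooth hsmooth).comp_stronglyMeasurable hθm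
  have hXm' : AEStronglyMeasurable (fun ω => gradient J (θ ω)) μ :=
    (hXm.mono hm).aestronglyMeasurable
  have hXG : ∀ᵐ ω ∂μ, ‖gradient J (θ ω)‖ ≤ G := .of_forall fun ω => norm_gradient_le hG hlip _
  have hcC : ∀ᵐ ω ∂μ, ‖(μ[g|m']) ω‖ ≤ G + B := by
    filter_upwards [hbias, hXG] with ω h1 h2
    have h3 := norm_sub_norm_le ((μ[g|m']) ω) (gradient J (θ ω))
    linarith
  obtain ⟨hgsq, hgsq_le⟩ := second_moment_bound hm hg hg2 hcC hvar
  have hXg := integrable_inner_of_bound hXm' hXG hg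
  have hXc := integrable_inner_of_bound hXm' hXG (integrable_condExp (f := g) (m := m'))
  have hXX : Integrable (fun ω => ‖gradient J (θ ω)‖ ^ 2) μ := by
    simpa only [real_inner_self_eq_norm_sq] using
      integrable_inner_of_bound hXm' hXG (Integrable.of_bound hXm' G hXG)
  have hinner : ∫ ω, ‖gradient J (θ ω)‖ ^ 2 ∂μ - G * B
      ≤ ∫ ω, inner ℝ (gradient J (θ ω)) (g ω) ∂μ := by
    rw [integral_inner_condExp hm hXm hXG hg]
    have h : ∀ᵐ ω ∂μ, ‖gradient J (θ ω)‖ ^ 2 - G * B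
        ≤ inner ℝ (gradient J (θ ω)) ((μ[g|m']) ω) := by
      filter_upwards [hbias, hXG] with ω h1 h2
      have h3 := abs_le.1 (abs_real_inner_le_norm (gradient J (θ ω))
        ((μ[g|m']) ω - gradient J (θ ω)))
      rw [inner_sub_right, real_inner_self_eq_norm_sq] at h3
      have h4 := mul_le_mul h2 h1 (norm_nonneg _) hG
      linarith [h3.1]
    have h' := integral_mono_ae (hXX.sub (integrable_const (G * B))) hXc h
    simpa [integral_sub hXX (integrable_const (G * B))] using h'
  have hJθ := integrable_comp_of_lipschitz hdiff.continuous hlip hθ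
  have hJθ' := integrable_comp_of_lipschitz hdiff.continuous hlip (hθ.sub (hg.smul α))
  have hpt : ∀ ω, J (θ ω - α • g ω) ≤ J (θ ω) - α * inner ℝ (gradient J (θ ω)) (g ω)
      + L / 2 * α ^ 2 * ‖g ω‖ ^ 2 := by
    intro ω
    have h := descent_lemma hdiff hsmooth (θ ω) (-(α • g ω))
    rw [← sub_eq_add_neg, inner_neg_right, inner_smul_right, norm_neg, norm_smul, mul_pow,
      Real.norm_eq_abs, sq_abs] at h
    linarith
  have hi : Integrable (fun ω => J (θ ω) - α * inner ℝ (gradient J (θ ω)) (g ω)) μ :=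
    hJθ.sub (hXg.const_mul α)
  have hi' := hgsq.const_mul (L / 2 * α ^ 2)
  have hmono := integral_mono hJθ' (hi.add hi') hpt
  simp only [Pi.sub_apply, Pi.add_apply, Pi.smul_apply] at hmono
  rw [integral_add hi hi', integral_sub hJθ (hXg.const_mul α), integral_const_mul,
    integral_const_mul] at hmono
  have h1 := mul_le_mul_of_nonneg_left hinner hα.le
  have h2 := mul_le_mul_of_nonneg_left hgsq_le (by positivity : 0 ≤ L / 2 * α ^ 2)
  linarith

end Probability

/-- biased SGD bound.  `ℱ` is the filtration of histories, `g i` is the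
stochastic gradient used at step `i`; conditionally on the history, its mean equals
`grad J(θ_i) + β_i` with `‖β_i‖ ≤ B` almost surely, and its conditional variance is at
most `V`. -/
theorem biased_sgd_sum_gradient_bound (d T : ℕ) (hT : 1 ≤ T)
    (G L V B α : ℝ) (hG : 0 ≤ G) (hL : 0 < L) (hV : 0 < V) (hB : 0 ≤ B) (hα : 0 < α)
    (J : EuclideanSpace ℝ (Fin d) → ℝ)
    (hdiff : Differentiable ℝ J)
    (hlip : ∀ x y, |J x - J y| ≤ G * ‖x - y‖)
    (hsmooth : ∀ x y, ‖gradient J x - gradient J y‖ ≤ L * ‖x - y‖)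
    (hbdd : BddBelow (Set.range J))
    (θ₀ : EuclideanSpace ℝ (Fin d)) (Δ₀ : ℝ) (hΔ₀ : Δ₀ = J θ₀ - ⨅ θ, J θ)
    (Ω : Type*) (m : MeasurableSpace Ω) (μ : Measure Ω) (hprob : IsProbabilityMeasure μ)
    (ℱ : Filtration ℕ m)
    (g θ : ℕ → Ω → EuclideanSpace ℝ (Fin d))
    (hθ0 : ∀ ω, θ 0 ω = θ₀)
    (hupd : ∀ i < T, ∀ ω, θ (i + 1) ω = θ i ω - α • g i ω)
    (hθadapt : ∀ i ≤ T, StronglyMeasurable[ℱ i] (θ i))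
    (hgadapt : ∀ i < T, StronglyMeasurable[ℱ (i + 1)] (g i))
    (hgint : ∀ i < T, Integrable (g i) μ)
    (hg2int : ∀ i < T, Integrable (fun ω => ‖g i ω - (μ[g i|ℱ i]) ω‖ ^ 2) μ)
    (hbias : ∀ i < T, ∀ᵐ ω ∂μ, ‖(μ[g i|ℱ i]) ω - gradient J (θ i ω)‖ ≤ B)
    (hvar : ∀ i < T, ∀ᵐ ω ∂μ,
      (μ[fun ω' => ‖g i ω' - (μ[g i|ℱ i]) ω'‖ ^ 2|ℱ i]) ω ≤ V) :
    ∑ i ∈ Finset.range T, ∫ ω, ‖gradient J (θ i ω)‖ ^ 2 ∂μ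
      ≤ Δ₀ / α + (L * T * α / 2) * ((G + B) ^ 2 + V) + (L * α + 1) * G * B * T := by
  have hθint : ∀ i ≤ T, Integrable (θ i) μ := by
    intro i
    induction i with
    | zero =>
      intro _
      rw [funext hθ0]
      exact integrable_const θ₀
    | succ k ih =>
      intro hk
      rw [funext (hupd k hk)]
      exact (ih (by omega)).sub ((hgint k hk).smul α)
  have hstep : ∀ i < T, ∫ ω, J (θ (i + 1) ω) ∂μ ≤ ∫ ω, J (θ i ω) ∂μ
      - α * ∫ ω, ‖gradient J (θ i ω)‖ ^ 2 ∂μ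
      + α * (G * B) + L / 2 * α ^ 2 * ((G + B) ^ 2 + V) := by
    intro i hi
    simp only [hupd i hi]
    exact expected_descent (ℱ.le i) hG hL hα hdiff hlip hsmooth (hθadapt i hi.le)
      (hθint i hi.le) (hgint i hi) (hg2int i hi) (hbias i hi) (hvar i hi)
  have htel : ∀ n ≤ T, α * ∑ i ∈ Finset.range n, ∫ ω, ‖gradient J (θ i ω)‖ ^ 2 ∂μ
      ≤ J θ₀ - ∫ ω, J (θ n ω) ∂μ
        + n * (α * (G * B) + L / 2 * α ^ 2 * ((G + B) ^ 2 + V)) := by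
    intro n
    induction n with
    | zero => simp [hθ0]
    | succ k ih =>
      intro hk
      have h1 := ih (by omega)
      have h2 := hstep k hk
      rw [Finset.sum_range_succ, mul_add]
      push_cast
      linarith
  have hinf : ⨅ θ, J θ ≤ ∫ ω, J (θ T ω) ∂μ := by
    simpa using integral_mono (integrable_const (⨅ θ, J θ))
      (integrable_comp_of_lipschitz hdiff.continuous hlip (hθint T le_rfl))
      fun ω => ciInf_le hbdd (θ T ω)
  have hmain := htel T le_rfl
  -- The slack between `G B T` and `(L α + 1) G B T`.
  have hextra : 0 ≤ α * (L * α * G * B * T) := by positivity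
  refine le_of_mul_le_mul_left ?_ hα
  have hα' : α * (Δ₀ / α) = Δ₀ := mul_div_cancel₀ Δ₀ hα.ne'
  rw [mul_add, mul_add, hα']
  linarith
end
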